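/- arXiv:1802.08964 — 2 statements merged into one kernel-verified Lean document; each statement's English description precedes it below -/
import Mathlib

section
/- Let k ≥ 2, κ := 2^{k−1}, ε ∈ (0,1), let Q0 ≥ 2 be a real number, let q1 ∈ ℤ[i] \ {0} and r1, j ∈ ℤ[i]. Set S_k(q1,r1,j) := ∑_{q∈ℤ[i]} exp(−π N(q)/(κ Q0)) · e(Re(j r1 q^k / q1^k)). Then |S_k(q1,r1,j)|^κ ≤ C(k,ε) · Q0^{κ−k+1+ε} · ∑_{α=(α_1,…,α_{k−1})∈ℤ[i]^{k−1}, N(α_v)≤Q0^{1+ε} for all v} ∑_{β∈ℤ[i]} exp(−π Q0 · N(β − conj(k!·α_1⋯α_{k−1}·j·r1 / q1^k))), where conj denotes complex conjugation and C(k,ε) depends only on k and ε. -/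
noncomputable section

/-- `e(t) = exp(2πit)`. -/
def e (t : ℝ) : ℂ := Complex.exp (2 * Real.pi * Complex.I * t)

/-- The norm of a Gaussian integer, as a real number. -/
def gN (z : GaussianInt) : ℝ := (z.re : ℝ) ^ 2 + (z.im : ℝ) ^ 2

/-- The norm form on `ℂ`: `N(z) = (Re z)² + (Im z)²`. -/
def cN (z : ℂ) : ℝ := z.re ^ 2 + z.im ^ 2

/-- The smoothed `k`-th power Gauss-type sum
`S_k(q₁,r₁,j) = ∑_{q ∈ ℤ[i]} exp(-π N(q)/(κQ₀)) e(Re(j r₁ q^k/q₁^k))`, `κ = 2^{k-1}`. -/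
def Sk (k : ℕ) (Q0 : ℝ) (q1 r1 j : GaussianInt) : ℂ :=
  ∑' q : GaussianInt,
    ((Real.exp (-Real.pi * gN q / ((2 : ℝ) ^ (k - 1) * Q0)) : ℝ) : ℂ)
      * e (((j : ℂ) * (r1 : ℂ) * (q : ℂ) ^ k / (q1 : ℂ) ^ k).re)

/-!
Multiplying the smoothed sum by its conjugate and completing the square in the Gaussian weights
turns `|S|²` into a Gaussian-weighted sum over shifts `α` of sums of the same kind, whose phase
`P(q + α) - P(q)` has degree one less. Jensen's inequality for the weights lets this be iterated
inside a power, so that `|S|^(2 ^ (k - 1))` is bounded by a weighted sum over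
`α₁, …, α_{k-1}` of sums with the linear phase `Re (k! α₁ ⋯ α_{k-1} c q)`. Poisson summation on
`ℤ[i]` evaluates each of them as `Q` times a theta series of parameter `π Q`.

The weight of `α` decays like `exp (-c N(α_v) / Q)`, so the shifts with some `N(α_v) > Q^(1 + ε)`
contribute a bounded amount in total, which is absorbed by the term `α = 0`, `β = 0`.
-/

section WeylPoisson

open Polynomial
open scoped ENNReal ComplexConjugate Nat

lemma e_eq_fourierChar (t : ℝ) : e t = Real.fourierChar t := by
  rw [Real.fourierChar_apply, e]
  congr 1
  push_cast
  ring

lemma norm_e (t : ℝ) : ‖e t‖ = 1 := by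
  rw [e_eq_fourierChar, Circle.norm_coe]

lemma e_zero : e 0 = 1 := by
  rw [e_eq_fourierChar, AddChar.map_zero_eq_one, Circle.coe_one]

lemma e_add (s t : ℝ) : e (s + t) = e s * e t := by
  simp only [e_eq_fourierChar, AddChar.map_add_eq_mul, Circle.coe_mul]

lemma conj_e (t : ℝ) : conj (e t) = e (-t) := by
  rw [e_eq_fourierChar, e_eq_fourierChar, AddChar.map_neg_eq_inv, Circle.coe_inv_eq_conj]

lemma cN_nonneg (z : ℂ) : 0 ≤ cN z := by
  unfold cN
  positivity

lemma gN_eq_cN (q : GaussianInt) : gN q = cN q := by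
  simp only [gN, cN, GaussianInt.intCast_re, GaussianInt.intCast_im]

/-! ### Gaussian sums on `ℤ[i]` and Poisson summation -/

lemma summable_exp_neg_mul_int_add_sq {t : ℝ} (ht : 0 < t) (u : ℝ) :
    Summable fun n : ℤ ↦ Real.exp (-t * ((n : ℝ) + u) ^ 2) := by
  have him : 0 < ((t / Real.pi : ℝ) * Complex.I).im := by
    simpa using div_pos ht Real.pi_pos
  have hθ := (summable_jacobiTheta₂_term_iff ((t * u / Real.pi : ℝ) * Complex.I) _).2 him
  refine (hθ.norm.mul_left (Real.exp (-t * u ^ 2))).congr fun n ↦ ?_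
  rw [norm_jacobiTheta₂_term, ← Real.exp_add]
  simp only [Complex.im_ofReal_mul, Complex.I_im]
  congr 1
  field_simp
  ring

lemma tsum_exp_neg_mul_int_add_sq_mul_e {t : ℝ} (ht : 0 < t) (u b : ℝ) :
    ∑' n : ℤ, (Real.exp (-t * ((n : ℝ) + u) ^ 2) : ℂ) * e (b * n) =
      Real.sqrt (Real.pi / t) * ∑' n : ℤ,
        (Real.exp (-(Real.pi ^ 2 / t) * ((n : ℝ) + -b) ^ 2) : ℂ) * e (u * (n + -b)) := by
  have hpi : (Real.pi : ℂ) ≠ 0 := Complex.ofReal_ne_zero.2 Real.pi_ne_zero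
  have htc : (t : ℂ) ≠ 0 := Complex.ofReal_ne_zero.2 ht.ne'
  have ha : 0 < ((t / Real.pi : ℝ) : ℂ).re := div_pos ht Real.pi_pos
  set c : ℂ := (-t * u / Real.pi : ℝ) + b * Complex.I with hc
  have hsqrt : 1 / ((t / Real.pi : ℝ) : ℂ) ^ (1 / 2 : ℂ) = Real.sqrt (Real.pi / t) := by
    rw [← inv_div t, Real.sqrt_inv, Real.sqrt_eq_rpow, Complex.ofReal_inv,
      Complex.ofReal_cpow (by positivity), one_div]
    norm_num
  have hleft (n : ℤ) : (Real.exp (-t * ((n : ℝ) + u) ^ 2) : ℂ) * e (b * n) =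
      Real.exp (-t * u ^ 2) *
        Complex.exp (-Real.pi * (t / Real.pi : ℝ) * n ^ 2 + 2 * Real.pi * c * n) := by
    rw [e, Complex.ofReal_exp, Complex.ofReal_exp, ← Complex.exp_add, ← Complex.exp_add, hc]
    congr 1
    push_cast
    field_simp
    ring
  have hright (n : ℤ) : Real.exp (-t * u ^ 2) *
        Complex.exp (-Real.pi / (t / Real.pi : ℝ) * (n + Complex.I * c) ^ 2) =
      (Real.exp (-(Real.pi ^ 2 / t) * ((n : ℝ) + -b) ^ 2) : ℂ) * e (u * (n + -b)) := by
    have hIc : Complex.I * c = -b - t * u / Real.pi * Complex.I := by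
      rw [hc]
      push_cast
      linear_combination (b : ℂ) * Complex.I_mul_I
    rw [e, Complex.ofReal_exp, Complex.ofReal_exp, ← Complex.exp_add, ← Complex.exp_add, hIc]
    congr 1
    push_cast
    field_simp
    linear_combination (-(t : ℂ) ^ 2 * u ^ 2) * Complex.I_sq
  simp_rw [hleft, ← hright, tsum_mul_left, Complex.tsum_exp_neg_quadratic ha, hsqrt]
  ring

/-- The coordinates `q = n + m i` of Gaussian integers, used to factor sums over `ℤ[i]` into sums
over `ℤ`. -/
def gaussianIntEquivProd : GaussianInt ≃ ℤ × ℤ where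
  toFun q := (q.re, q.im)
  invFun p := ⟨p.1, p.2⟩

lemma summable_re_mul_im {R : Type*} [NormedRing R] [CompleteSpace R] {f g : ℤ → R}
    (hf : Summable fun n ↦ ‖f n‖) (hg : Summable fun n ↦ ‖g n‖) :
    Summable fun q : GaussianInt ↦ f q.re * g q.im :=
  gaussianIntEquivProd.summable_iff.2 (summable_mul_of_summable_norm hf hg)

lemma tsum_re_mul_im {R : Type*} [NormedRing R] [CompleteSpace R] {f g : ℤ → R}
    (hf : Summable fun n ↦ ‖f n‖) (hg : Summable fun n ↦ ‖g n‖) :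
    ∑' q : GaussianInt, f q.re * g q.im = (∑' n, f n) * ∑' n, g n := by
  rw [tsum_mul_tsum_of_summable_norm hf hg, ← gaussianIntEquivProd.tsum_eq]
  rfl

/-- The Gaussian `exp (-t N(z))` on `ℂ`. -/
def gaussian (t : ℝ) (z : ℂ) : ℝ := Real.exp (-t * cN z)

lemma gaussian_pos (t : ℝ) (z : ℂ) : 0 < gaussian t z := Real.exp_pos _

lemma gaussian_le_gaussian {s t : ℝ} (hst : s ≤ t) (z : ℂ) : gaussian t z ≤ gaussian s z :=
  Real.exp_le_exp.2 <| mul_le_mul_of_nonneg_right (neg_le_neg hst) (cN_nonneg z)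

lemma gaussian_intCast_add (t : ℝ) (q : GaussianInt) (a : ℂ) :
    gaussian t (q + a) =
      Real.exp (-t * ((q.re : ℝ) + a.re) ^ 2) * Real.exp (-t * ((q.im : ℝ) + a.im) ^ 2) := by
  rw [gaussian, cN, ← Real.exp_add, Complex.add_re, Complex.add_im, GaussianInt.intCast_re,
    GaussianInt.intCast_im, mul_add]

/-- Completing the square: `N(z + α) + N(z) = 2 N(z + α / 2) + N(α) / 2`. -/
lemma gaussian_add_mul_gaussian (t : ℝ) (z α : ℂ) :
    gaussian t (z + α) * gaussian t z = gaussian (t / 2) α * gaussian (2 * t) (z + α / 2) := by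
  simp only [gaussian, cN, ← Real.exp_add, Complex.add_re, Complex.add_im, Complex.div_ofNat_re,
    Complex.div_ofNat_im]
  ring_nf

lemma summable_gaussian {t : ℝ} (ht : 0 < t) (a : ℂ) :
    Summable fun q : GaussianInt ↦ gaussian t (q + a) := by
  simp only [gaussian_intCast_add]
  exact summable_re_mul_im (summable_exp_neg_mul_int_add_sq ht a.re).norm
    (summable_exp_neg_mul_int_add_sq ht a.im).norm

lemma norm_gaussian_mul_e (t : ℝ) (z : ℂ) (x : ℝ) :
    ‖(gaussian t z : ℂ) * e x‖ = gaussian t z := by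
  rw [norm_mul, norm_e, mul_one, Complex.norm_real, Real.norm_of_nonneg (gaussian_pos t z).le]

/-- The exponential sum over `ℤ[i]` with phase `f`, smoothed by the Gaussian of parameter `t`
centred at `-a`. -/
def smoothedSum (t : ℝ) (a : ℂ) (f : GaussianInt → ℝ) : ℂ :=
  ∑' q : GaussianInt, (gaussian t (q + a) : ℂ) * e (f q)

lemma summable_norm_gaussian_mul_e {t : ℝ} (ht : 0 < t) (a : ℂ) (f : GaussianInt → ℝ) :
    Summable fun q : GaussianInt ↦ ‖(gaussian t (q + a) : ℂ) * e (f q)‖ := by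
  simpa only [norm_gaussian_mul_e] using summable_gaussian ht a

lemma smoothedSum_add_const (t : ℝ) (a : ℂ) (f : GaussianInt → ℝ) (x : ℝ) :
    smoothedSum t a (fun q ↦ f q + x) = smoothedSum t a f * e x := by
  simp only [smoothedSum, e_add, ← mul_assoc, tsum_mul_right]

lemma smoothedSum_mul_re {t : ℝ} (ht : 0 < t) (a c b : ℂ) :
    smoothedSum t a (fun q ↦ (b * (q + c)).re) =
      (∑' n : ℤ, (Real.exp (-t * ((n : ℝ) + a.re) ^ 2) : ℂ) * e (b.re * (n + c.re))) *
      ∑' n : ℤ, (Real.exp (-t * ((n : ℝ) + a.im) ^ 2) : ℂ) * e (-b.im * (n + c.im)) := by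
  have hsum (u v d : ℝ) : Summable fun n : ℤ ↦
      ‖(Real.exp (-t * ((n : ℝ) + u) ^ 2) : ℂ) * e (d * (n + v))‖ := by
    simpa only [norm_mul, norm_e, mul_one, Complex.norm_real] using
      (summable_exp_neg_mul_int_add_sq ht u).norm
  rw [← tsum_re_mul_im (hsum _ _ _) (hsum _ _ _), smoothedSum]
  refine tsum_congr fun q ↦ ?_
  have hre : (b * (q + c)).re = b.re * (q.re + c.re) + -b.im * (q.im + c.im) := by
    rw [Complex.mul_re, Complex.add_re, Complex.add_im, GaussianInt.intCast_re,
      GaussianInt.intCast_im]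
    ring
  rw [gaussian_intCast_add, hre, e_add, Complex.ofReal_mul]
  ring

lemma smoothedSum_mul_re_eq_dual {t : ℝ} (ht : 0 < t) (a b : ℂ) :
    smoothedSum t a (fun q ↦ (b * q).re) = (Real.pi / t : ℝ) *
      smoothedSum (Real.pi ^ 2 / t) (-conj b) (fun β ↦ (conj a * (β + -conj b)).re) := by
  have hdual : 0 < Real.pi ^ 2 / t := div_pos (pow_pos Real.pi_pos 2) ht
  have hleft := smoothedSum_mul_re ht a 0 b
  have hright := smoothedSum_mul_re hdual (-conj b) (-conj b) (conj a)
  have hsqrt : (Real.sqrt (Real.pi / t) : ℂ) * Real.sqrt (Real.pi / t) = (Real.pi / t : ℝ) := by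
    rw [← Complex.ofReal_mul, Real.mul_self_sqrt (div_nonneg Real.pi_nonneg ht.le)]
  simp only [add_zero, Complex.zero_re, Complex.zero_im,
    tsum_exp_neg_mul_int_add_sq_mul_e ht] at hleft
  simp only [Complex.neg_re, Complex.neg_im, Complex.conj_re, Complex.conj_im, neg_neg] at hright
  simp only [neg_neg] at hleft
  rw [hleft, hright, ← hsqrt]
  ring

/-! ### Theta series and their dual bounds -/

/-- The theta series `∑ exp (-t N(q + a))` over `q ∈ ℤ[i]`, with values in `ℝ≥0∞` so that it can be
summed further without summability conditions. -/
def gaussianTheta (t : ℝ) (a : ℂ) : ℝ≥0∞ :=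
  ∑' q : GaussianInt, ENNReal.ofReal (gaussian t (q + a))

lemma gaussianTheta_eq_ofReal_tsum {t : ℝ} (ht : 0 < t) (a : ℂ) :
    gaussianTheta t a = ENNReal.ofReal (∑' q : GaussianInt, gaussian t (q + a)) :=
  (ENNReal.ofReal_tsum_of_nonneg (fun _ ↦ (gaussian_pos _ _).le) (summable_gaussian ht a)).symm

lemma gaussianTheta_ne_top {t : ℝ} (ht : 0 < t) (a : ℂ) : gaussianTheta t a ≠ ∞ := by
  rw [gaussianTheta_eq_ofReal_tsum ht]
  exact ENNReal.ofReal_ne_top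

lemma gaussianTheta_zero_right (t : ℝ) :
    gaussianTheta t 0 = ∑' q : GaussianInt, ENNReal.ofReal (gaussian t q) := by
  simp only [gaussianTheta, add_zero]

lemma gaussianTheta_anti {s t : ℝ} (hst : s ≤ t) (a : ℂ) :
    gaussianTheta t a ≤ gaussianTheta s a :=
  ENNReal.tsum_le_tsum fun _ ↦ ENNReal.ofReal_le_ofReal (gaussian_le_gaussian hst _)

lemma one_le_gaussianTheta_zero (t : ℝ) : 1 ≤ gaussianTheta t 0 := by
  refine le_trans ?_ (ENNReal.le_tsum 0)
  simp [gaussian, cN]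

lemma enorm_coe_of_nonneg {x : ℝ} (hx : 0 ≤ x) : ‖(x : ℂ)‖ₑ = ENNReal.ofReal x := by
  rw [← ofReal_norm, Complex.norm_real, Real.norm_of_nonneg hx]

lemma enorm_smoothedSum_le (t : ℝ) (a : ℂ) (f : GaussianInt → ℝ) :
    ‖smoothedSum t a f‖ₑ ≤ gaussianTheta t a := by
  refine enorm_tsum_le_tsum_enorm.trans_eq (tsum_congr fun q ↦ ?_)
  rw [← ofReal_norm, norm_gaussian_mul_e]

lemma enorm_smoothedSum_zero {t : ℝ} (ht : 0 < t) (a : ℂ) :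
    ‖smoothedSum t a 0‖ₑ = gaussianTheta t a := by
  rw [gaussianTheta_eq_ofReal_tsum ht, ← enorm_coe_of_nonneg
    (tsum_nonneg fun _ ↦ (gaussian_pos _ _).le), Complex.ofReal_tsum]
  simp only [smoothedSum, Pi.zero_apply, e_zero, mul_one]

/-- The dual side of Poisson summation for the Gaussian of parameter `t` and the linear phase
`q ↦ Re (b q)`, with the unimodular factors removed. -/
def dualTheta (t : ℝ) (b : ℂ) : ℝ≥0∞ :=
  ENNReal.ofReal (Real.pi / t) * gaussianTheta (Real.pi ^ 2 / t) (-conj b)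

lemma enorm_smoothedSum_mul_re_le {t : ℝ} (ht : 0 < t) (a b : ℂ) :
    ‖smoothedSum t a (fun q ↦ (b * q).re)‖ₑ ≤ dualTheta t b := by
  rw [dualTheta, smoothedSum_mul_re_eq_dual ht, enorm_mul,
    enorm_coe_of_nonneg (div_nonneg Real.pi_nonneg ht.le)]
  gcongr
  exact enorm_smoothedSum_le _ _ _

lemma gaussianTheta_le_dual {t : ℝ} (ht : 0 < t) (a : ℂ) :
    gaussianTheta t a ≤ ENNReal.ofReal (Real.pi / t) * gaussianTheta (Real.pi ^ 2 / t) 0 := by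
  have h := enorm_smoothedSum_mul_re_le ht a 0
  simp only [dualTheta, zero_mul, Complex.zero_re, map_zero, neg_zero] at h
  exact (enorm_smoothedSum_zero ht a).symm.trans_le h

lemma gaussianTheta_le_of_pi_le {t : ℝ} (ht : Real.pi ≤ t) (a : ℂ) :
    gaussianTheta t a ≤ gaussianTheta Real.pi 0 := by
  have h := gaussianTheta_le_dual Real.pi_pos a
  rw [div_self Real.pi_ne_zero, ENNReal.ofReal_one, one_mul, sq,
    mul_div_cancel_right₀ _ Real.pi_ne_zero] at h
  exact (gaussianTheta_anti ht a).trans h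

lemma gaussianTheta_le_of_le_pi {t : ℝ} (ht : 0 < t) (htpi : t ≤ Real.pi) (a : ℂ) :
    gaussianTheta t a ≤ ENNReal.ofReal (Real.pi / t) * gaussianTheta Real.pi 0 := by
  refine (gaussianTheta_le_dual ht a).trans ?_
  gcongr
  apply gaussianTheta_anti
  rw [le_div_iff₀ ht, sq]
  gcongr

/-! ### Weyl differencing -/

lemma smoothedSum_mul_conj {t : ℝ} (ht : 0 < t) (a : ℂ) (f : GaussianInt → ℝ) :
    smoothedSum t a f * conj (smoothedSum t a f) = ∑' α : GaussianInt,
      (gaussian (t / 2) α : ℂ) * smoothedSum (2 * t) (a + α / 2) (fun q ↦ f (q + α) - f q) := by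
  set F : GaussianInt → ℂ := fun q ↦ (gaussian t (q + a) : ℂ) * e (f q) with hF
  have hsum : Summable fun q ↦ ‖F q‖ := summable_norm_gaussian_mul_e ht a f
  have hconj : Summable fun q ↦ ‖conj (F q)‖ := by simpa only [RCLike.norm_conj] using hsum
  let shear : GaussianInt × GaussianInt ≃ GaussianInt × GaussianInt :=
    (Equiv.prodComm _ _).trans (Equiv.prodShear (Equiv.refl _) Equiv.addLeft)
  have hshear : Summable fun p ↦ conj (F (shear p).1) * F (shear p).2 :=
    shear.summable_iff.2 (summable_mul_of_summable_norm hconj hsum)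
  have hterm (α q : GaussianInt) : conj (F q) * F (q + α) = gaussian (t / 2) α *
      ((gaussian (2 * t) (q + (a + α / 2)) : ℂ) * e (f (q + α) - f q)) := by
    have hsq := congrArg Complex.ofReal (gaussian_add_mul_gaussian t (q + a) α)
    rw [add_right_comm, Complex.ofReal_mul, Complex.ofReal_mul] at hsq
    simp only [hF, map_mul, Complex.conj_ofReal, conj_e, sub_eq_add_neg, e_add, map_add]
    rw [← mul_assoc (gaussian (t / 2) α : ℂ), ← add_assoc, ← hsq]
    ring
  calc smoothedSum t a f * conj (smoothedSum t a f)
      = (∑' q, conj (F q)) * ∑' q, F q := by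
        rw [mul_comm, smoothedSum, Complex.conj_tsum]
    _ = ∑' p, conj (F (shear p).1) * F (shear p).2 := by
        rw [tsum_mul_tsum_of_summable_norm hconj hsum, ← shear.tsum_eq]
    _ = ∑' α, ∑' q, conj (F q) * F (q + α) := hshear.tsum_prod
    _ = _ := by simp only [hterm, tsum_mul_left, smoothedSum]

lemma enorm_smoothedSum_sq_le {t : ℝ} (ht : 0 < t) (a : ℂ) (f : GaussianInt → ℝ) :
    ‖smoothedSum t a f‖ₑ ^ 2 ≤ ∑' α : GaussianInt, ENNReal.ofReal (gaussian (t / 2) α) *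
      ‖smoothedSum (2 * t) (a + α / 2) (fun q ↦ f (q + α) - f q)‖ₑ := by
  have hmul := congrArg enorm (smoothedSum_mul_conj ht a f)
  rw [enorm_mul, RCLike.enorm_conj, ← sq] at hmul
  refine hmul.trans_le (enorm_tsum_le_tsum_enorm.trans_eq (tsum_congr fun α ↦ ?_))
  rw [enorm_mul, enorm_coe_of_nonneg (gaussian_pos _ _).le]

lemma sum_mul_pow_succ_le {ι : Type*} (s : Finset ι) (w f : ι → ℝ≥0∞) (n : ℕ) :
    (∑ i ∈ s, w i * f i) ^ (n + 1) ≤ (∑ i ∈ s, w i) ^ n * ∑ i ∈ s, w i * f i ^ (n + 1) := by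
  have hp : (1 : ℝ) ≤ (n + 1 : ℕ) := by exact_mod_cast n.succ_pos
  have hp0 : ((n + 1 : ℕ) : ℝ) ≠ 0 := by positivity
  have hexp : (1 - ((n + 1 : ℕ) : ℝ)⁻¹) * (n + 1 : ℕ) = n := by
    rw [sub_mul, inv_mul_cancel₀ hp0]
    push_cast
    ring
  have h := ENNReal.rpow_le_rpow (ENNReal.inner_le_weight_mul_Lp_of_nonneg s hp w f)
    (Nat.cast_nonneg (n + 1))
  rw [ENNReal.mul_rpow_of_nonneg _ _ (Nat.cast_nonneg _), ← ENNReal.rpow_mul, ← ENNReal.rpow_mul,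
    inv_mul_cancel₀ hp0, hexp, ENNReal.rpow_one] at h
  simpa only [ENNReal.rpow_natCast] using h

lemma tsum_mul_pow_succ_le {ι : Type*} (w f : ι → ℝ≥0∞) (n : ℕ) :
    (∑' i, w i * f i) ^ (n + 1) ≤ (∑' i, w i) ^ n * ∑' i, w i * f i ^ (n + 1) := by
  have hlim : Filter.Tendsto (fun s : Finset ι ↦ (∑ i ∈ s, w i * f i) ^ (n + 1)) Filter.atTop
      (nhds ((∑' i, w i * f i) ^ (n + 1))) :=
    (ENNReal.continuous_pow (n + 1)).continuousAt.tendsto.comp ENNReal.summable.hasSum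
  refine le_of_tendsto' hlim fun s ↦ (sum_mul_pow_succ_le s w f n).trans ?_
  gcongr <;> exact ENNReal.sum_le_tsum _

lemma enorm_smoothedSum_sq_pow_succ_le {s t : ℝ} (ht : 0 < t) (hst : s ≤ t / 2) (a : ℂ)
    (f : GaussianInt → ℝ) (n : ℕ) :
    (‖smoothedSum t a f‖ₑ ^ 2) ^ (n + 1) ≤
      gaussianTheta s 0 ^ n * ∑' α : GaussianInt, ENNReal.ofReal (gaussian s α) *
        ‖smoothedSum (2 * t) (a + α / 2) (fun q ↦ f (q + α) - f q)‖ₑ ^ (n + 1) := by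
  have hsq : ‖smoothedSum t a f‖ₑ ^ 2 ≤ ∑' α : GaussianInt, ENNReal.ofReal (gaussian s α) *
      ‖smoothedSum (2 * t) (a + α / 2) (fun q ↦ f (q + α) - f q)‖ₑ := by
    refine (enorm_smoothedSum_sq_le ht a f).trans (ENNReal.tsum_le_tsum fun α ↦ ?_)
    gcongr
    exact gaussian_le_gaussian hst _
  rw [gaussianTheta_zero_right]
  exact (pow_le_pow_left' hsq _).trans (tsum_mul_pow_succ_le _ _ _)

lemma coeff_taylor_of_natDegree_le_succ {R : Type*} [CommSemiring R] {P : R[X]} {n : ℕ}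
    (hP : P.natDegree ≤ n + 1) (r : R) :
    (taylor r P).coeff n = P.coeff n + (n + 1) * r * P.coeff (n + 1) := by
  have hdeg : (hasseDeriv n P).natDegree ≤ 1 := (natDegree_hasseDeriv_le P n).trans (by omega)
  rw [taylor_coeff, eq_X_add_C_of_natDegree_le_one hdeg]
  simp only [hasseDeriv_coeff, eval_add, eval_mul, eval_C, eval_X, add_comm 1 n, zero_add,
    Nat.choose_self, Nat.choose_succ_self_right]
  push_cast
  ring

lemma natDegree_taylor_sub_le {R : Type*} [CommRing R] {P : R[X]} {n : ℕ}
    (hP : P.natDegree ≤ n + 1) (r : R) : (taylor r P - P).natDegree ≤ n := by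
  refine natDegree_le_iff_coeff_eq_zero.2 fun m hm ↦ ?_
  have hPm : P.coeff (m + 1) = 0 := coeff_eq_zero_of_natDegree_lt (by omega)
  rw [coeff_sub, coeff_taylor_of_natDegree_le_succ (by omega), hPm, mul_zero, add_zero, sub_self]

/-- The phase `q ↦ Re P(q)` attached to a complex polynomial `P`. -/
def polyPhase (P : ℂ[X]) (q : GaussianInt) : ℝ := (P.eval (q : ℂ)).re

lemma polyPhase_add_sub (P : ℂ[X]) (q α : GaussianInt) :
    polyPhase P (q + α) - polyPhase P q = polyPhase (taylor (α : ℂ) P - P) q := by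
  simp only [polyPhase, eval_sub, taylor_eval, map_add, Complex.sub_re]

lemma enorm_smoothedSum_polyPhase_le_of_natDegree_le_one {t : ℝ} (ht : 0 < t) (a : ℂ) {P : ℂ[X]}
    (hP : P.natDegree ≤ 1) : ‖smoothedSum t a (polyPhase P)‖ₑ ≤ dualTheta t (P.coeff 1) := by
  have hphase : polyPhase P = fun q : GaussianInt ↦ (P.coeff 1 * q).re + (P.coeff 0).re := by
    funext q
    rw [polyPhase, eq_X_add_C_of_natDegree_le_one hP]
    simp
  rw [hphase, smoothedSum_add_const, enorm_mul, ← ofReal_norm (e _), norm_e, ENNReal.ofReal_one,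
    mul_one]
  exact enorm_smoothedSum_mul_re_le ht a _

/-- The linear coefficient `(m + 1)! α₁ ⋯ α_m c` that remains after differencing a polynomial of
degree at most `m + 1`, with coefficient `c` in degree `m + 1`, along `α₁, …, α_m`. -/
def differencedCoeff (c : ℂ) {m : ℕ} (α : Fin m → GaussianInt) : ℂ :=
  ((m + 1)! : ℂ) * (∏ v, (α v : ℂ)) * c

lemma differencedCoeff_cons (c : ℂ) {m : ℕ} (a : GaussianInt) (α : Fin m → GaussianInt) :
    differencedCoeff c (Fin.cons a α : Fin (m + 1) → GaussianInt) =
      differencedCoeff (((m + 1 : ℕ) + 1) * a * c) α := by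
  simp only [differencedCoeff, Fin.prod_univ_succ, Fin.cons_zero, Fin.cons_succ,
    Nat.factorial_succ (m + 1)]
  push_cast
  ring

lemma tsum_fin_succ_arrow {β : Type*} {m : ℕ} (f : (Fin (m + 1) → β) → ℝ≥0∞) :
    ∑' α, f α = ∑' (a : β) (α : Fin m → β), f (Fin.cons a α) := by
  rw [← (Fin.consEquiv fun _ ↦ β).tsum_eq, ENNReal.tsum_prod']
  rfl

lemma tsum_prod_fin_arrow {β : Type*} (m : ℕ) (w : β → ℝ≥0∞) :
    ∑' α : Fin m → β, ∏ v, w (α v) = (∑' a, w a) ^ m := by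
  induction m with
  | zero => simp
  | succ m ih =>
    simp only [tsum_fin_succ_arrow, Fin.prod_univ_succ, Fin.cons_zero, Fin.cons_succ,
      ENNReal.tsum_mul_left, ih, ENNReal.tsum_mul_right, pow_succ']

lemma enorm_smoothedSum_polyPhase_pow_le (m : ℕ) {s t : ℝ} (ht : 0 < t) (hst : s ≤ t / 2) (a : ℂ)
    {P : ℂ[X]} (hP : P.natDegree ≤ m + 1) :
    ‖smoothedSum t a (polyPhase P)‖ₑ ^ 2 ^ m ≤ gaussianTheta s 0 ^ (2 ^ m - (m + 1)) *
      ∑' α : Fin m → GaussianInt, (∏ v, ENNReal.ofReal (gaussian s (α v))) *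
        dualTheta (2 ^ m * t) (differencedCoeff (P.coeff (m + 1)) α) := by
  induction m generalizing t a P with
  | zero =>
    simpa [differencedCoeff] using enorm_smoothedSum_polyPhase_le_of_natDegree_le_one ht a hP
  | succ m ih =>
    have hpow : 2 ^ m - 1 + 1 = 2 ^ m := Nat.sub_add_cancel Nat.one_le_two_pow
    have hexp : 2 ^ (m + 1) - (m + 1 + 1) = (2 ^ m - 1) + (2 ^ m - (m + 1)) := by
      have := Nat.lt_two_pow_self (n := m)
      rw [pow_succ]
      omega
    have hcoeff (α : GaussianInt) : (taylor (α : ℂ) P - P).coeff (m + 1) =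
        ((m + 1 : ℕ) + 1) * α * P.coeff (m + 1 + 1) := by
      rw [coeff_sub, coeff_taylor_of_natDegree_le_succ hP, add_sub_cancel_left]
    have hstep := enorm_smoothedSum_sq_pow_succ_le ht hst a (polyPhase P) (2 ^ m - 1)
    simp only [polyPhase_add_sub, hpow] at hstep
    rw [pow_succ' 2 m, pow_mul, ← pow_succ', hexp, pow_add, mul_assoc]
    refine hstep.trans (mul_le_mul_right ?_ _)
    rw [← ENNReal.tsum_mul_left, tsum_fin_succ_arrow]
    refine ENNReal.tsum_le_tsum fun α ↦ ?_
    have hdiff := ih (t := 2 * t) (by positivity) (by linarith) (a + α / 2)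
      (natDegree_taylor_sub_le hP (α : ℂ))
    rw [hcoeff, ← mul_assoc, ← pow_succ] at hdiff
    refine (mul_le_mul_right hdiff _).trans_eq ?_
    simp only [Fin.prod_univ_succ, Fin.cons_zero, Fin.cons_succ, differencedCoeff_cons, mul_assoc,
      ENNReal.tsum_mul_left]
    ring

/-! ### Truncation of the shifts -/

lemma gaussianTheta_div_le {c Q : ℝ} (hc : 0 < c) (hcpi : c ≤ Real.pi) (hQ : 1 ≤ Q) (a : ℂ) :
    gaussianTheta (c / Q) a ≤
      ENNReal.ofReal Q * (ENNReal.ofReal (Real.pi / c) * gaussianTheta Real.pi 0) := by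
  have hQ0 : 0 < Q := zero_lt_one.trans_le hQ
  refine (gaussianTheta_le_of_le_pi (div_pos hc hQ0) ((div_le_self hc.le hQ).trans hcpi)
    a).trans_eq ?_
  rw [div_div_eq_mul_div, mul_div_right_comm, mul_comm, ENNReal.ofReal_mul' hQ0.le]
  ring

lemma dualTheta_pi_div (Q : ℝ) (b : ℂ) :
    dualTheta (Real.pi / Q) b = ENNReal.ofReal Q * gaussianTheta (Real.pi * Q) (-conj b) := by
  rw [dualTheta, div_div_cancel₀ Real.pi_ne_zero, sq, mul_div_assoc,
    div_div_cancel₀ Real.pi_ne_zero]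

lemma gaussian_add_param (s u : ℝ) (z : ℂ) :
    gaussian (s + u) z = gaussian s z * gaussian u z := by
  rw [gaussian, gaussian, gaussian, ← Real.exp_add]
  ring_nf

lemma gaussian_le_one {s : ℝ} (hs : 0 ≤ s) (z : ℂ) : gaussian s z ≤ 1 :=
  Real.exp_le_one_iff.2 (mul_nonpos_of_nonpos_of_nonneg (neg_nonpos.2 hs) (cN_nonneg z))

lemma prod_gaussian_le_one {ι : Type*} [Fintype ι] {s : ℝ} (hs : 0 ≤ s) (z : ι → ℂ) :
    ∏ v, gaussian s (z v) ≤ 1 :=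
  Finset.prod_le_one (fun _ _ ↦ (gaussian_pos _ _).le) fun v _ ↦ gaussian_le_one hs (z v)

lemma prod_gaussian_le_exp {ι : Type*} [Fintype ι] {s Y : ℝ} (hs : 0 ≤ s) {z : ι → ℂ} {v : ι}
    (hv : Y ≤ cN (z v)) : ∏ w, gaussian s (z w) ≤ Real.exp (-s * Y) := by
  have hsum : Y ≤ ∑ w, cN (z w) :=
    hv.trans (Finset.single_le_sum (fun w _ ↦ cN_nonneg (z w)) (Finset.mem_univ v))
  simp only [gaussian, ← Real.exp_sum, ← Finset.mul_sum]
  exact Real.exp_le_exp.2 (mul_le_mul_of_nonpos_left hsum (neg_nonpos.2 hs))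

/-- Outside the box, `s` supplies the decay and `u` keeps the sum over `α` convergent. -/
lemma prod_gaussian_mul_le_indicator_add {ι : Type*} [Fintype ι] {s u : ℝ} (hs : 0 ≤ s)
    (hu : 0 ≤ u) (Y : ℝ) {A : (ι → GaussianInt) → ℝ≥0∞} {K : ℝ≥0∞} (hA : ∀ α, A α ≤ K)
    (α : ι → GaussianInt) :
    (∏ v, ENNReal.ofReal (gaussian (s + u) (α v))) * A α ≤
      {α : ι → GaussianInt | ∀ v, gN (α v) ≤ Y}.indicator A α +
        ENNReal.ofReal (Real.exp (-s * Y)) * (∏ v, ENNReal.ofReal (gaussian u (α v))) * K := by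
  by_cases hα : ∀ v, gN (α v) ≤ Y
  · rw [Set.indicator_of_mem (by exact hα),
      ← ENNReal.ofReal_prod_of_nonneg fun _ _ ↦ (gaussian_pos _ _).le]
    refine le_add_right (mul_le_of_le_one_left' (ENNReal.ofReal_le_one.2 ?_))
    exact prod_gaussian_le_one (add_nonneg hs hu) fun v ↦ (α v : ℂ)
  · obtain ⟨v, hv⟩ := not_forall.1 hα
    rw [gN_eq_cN, not_le] at hv
    simp only [gaussian_add_param, ENNReal.ofReal_mul (gaussian_pos _ _).le,
      Finset.prod_mul_distrib]
    refine le_add_left (mul_le_mul' (mul_le_mul_left ?_ _) (hA α))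
    rw [← ENNReal.ofReal_prod_of_nonneg fun _ _ ↦ (gaussian_pos _ _).le]
    exact ENNReal.ofReal_le_ofReal (prod_gaussian_le_exp (z := fun v ↦ (α v : ℂ)) hs hv.le)

lemma tsum_prod_gaussian_mul_le (m : ℕ) {s u : ℝ} (hs : 0 ≤ s) (hu : 0 ≤ u) (Y : ℝ)
    {A : (Fin m → GaussianInt) → ℝ≥0∞} {K : ℝ≥0∞} (hA : ∀ α, A α ≤ K) :
    ∑' α : Fin m → GaussianInt, (∏ v, ENNReal.ofReal (gaussian (s + u) (α v))) * A α ≤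
      (∑' α : {α : Fin m → GaussianInt // ∀ v, gN (α v) ≤ Y}, A α) +
        ENNReal.ofReal (Real.exp (-s * Y)) * gaussianTheta u 0 ^ m * K := by
  have hbox := tsum_subtype {α : Fin m → GaussianInt | ∀ v, gN (α v) ≤ Y} A
  refine (ENNReal.tsum_le_tsum (prod_gaussian_mul_le_indicator_add hs hu Y hA)).trans_eq ?_
  rw [ENNReal.tsum_add, ENNReal.tsum_mul_right, ENNReal.tsum_mul_left, ← hbox,
    tsum_prod_fin_arrow m fun a : GaussianInt ↦ ENNReal.ofReal (gaussian u a),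
    gaussianTheta_zero_right]
  rfl

lemma exists_pow_mul_exp_neg_rpow_le (m : ℕ) {c ε : ℝ} (hc : 0 < c) (hε : 0 < ε) :
    ∃ D : ℝ, ∀ Q : ℝ, 1 ≤ Q → Q ^ m * Real.exp (-c * Q ^ ε) ≤ D := by
  obtain ⟨n, hn⟩ := exists_nat_ge ((m : ℝ) / ε)
  refine ⟨n ! / c ^ n, fun Q hQ ↦ ?_⟩
  have hQ0 : 0 ≤ Q := zero_le_one.trans hQ
  have hpow : Q ^ m ≤ (Q ^ ε) ^ n := by
    rw [← Real.rpow_natCast, ← Real.rpow_mul_natCast hQ0]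
    exact Real.rpow_le_rpow_of_exponent_le hQ (by rwa [mul_comm, ← div_le_iff₀ hε])
  have hexp := Real.pow_div_factorial_le_exp (c * Q ^ ε) (by positivity) n
  rw [neg_mul, Real.exp_neg, ← div_eq_mul_inv, div_le_iff₀ (Real.exp_pos _)]
  calc Q ^ m ≤ (Q ^ ε) ^ n := hpow
    _ = n ! / c ^ n * ((c * Q ^ ε) ^ n / n !) := by
        rw [mul_pow]
        field_simp
    _ ≤ n ! / c ^ n * Real.exp (c * Q ^ ε) := by gcongr

lemma exists_exp_mul_gaussianTheta_pow_le (m : ℕ) {c ε : ℝ} (hc : 0 < c) (hcpi : c ≤ Real.pi)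
    (hε : 0 < ε) : ∃ D : ℝ≥0∞, D ≠ ∞ ∧ ∀ Q : ℝ, 1 ≤ Q →
      ENNReal.ofReal (Real.exp (-(c / Q) * Q ^ (1 + ε))) * gaussianTheta (c / Q) 0 ^ m ≤ D := by
  obtain ⟨D, hD⟩ := exists_pow_mul_exp_neg_rpow_le m hc hε
  have hM := ENNReal.mul_ne_top (ENNReal.ofReal_ne_top (r := Real.pi / c))
    (gaussianTheta_ne_top Real.pi_pos 0)
  refine ⟨_, ENNReal.mul_ne_top (ENNReal.ofReal_ne_top (r := D))
    (ENNReal.pow_ne_top (n := m) hM), fun Q hQ ↦ ?_⟩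
  have hQ0 : 0 < Q := zero_lt_one.trans_le hQ
  have hexp : -(c / Q) * Q ^ (1 + ε) = -c * Q ^ ε := by
    rw [Real.rpow_add hQ0, Real.rpow_one]
    field_simp
  calc ENNReal.ofReal (Real.exp (-(c / Q) * Q ^ (1 + ε))) * gaussianTheta (c / Q) 0 ^ m
      ≤ ENNReal.ofReal (Real.exp (-c * Q ^ ε)) * (ENNReal.ofReal Q *
          (ENNReal.ofReal (Real.pi / c) * gaussianTheta Real.pi 0)) ^ m := by
        rw [hexp]
        gcongr
        exact gaussianTheta_div_le hc hcpi hQ 0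
    _ = ENNReal.ofReal (Q ^ m * Real.exp (-c * Q ^ ε)) *
          (ENNReal.ofReal (Real.pi / c) * gaussianTheta Real.pi 0) ^ m := by
        rw [mul_pow, ENNReal.ofReal_mul (by positivity), ENNReal.ofReal_pow hQ0.le]
        ring
    _ ≤ _ := by
        gcongr
        exact hD Q hQ

/-- The sum over differencing shifts `α` with `N(α_v) ≤ Y` of the dual theta series of parameter
`π Q` at the differenced coefficient, which dominates the powers of the smoothed sums. -/
def boxThetaSum (m : ℕ) (Q Y : ℝ) (c : ℂ) : ℝ≥0∞ :=
  ∑' α : {α : Fin m → GaussianInt // ∀ v, gN (α v) ≤ Y},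
    gaussianTheta (Real.pi * Q) (-conj (differencedCoeff c α.1))

lemma one_le_boxThetaSum {m : ℕ} (hm : m ≠ 0) (Q : ℝ) {Y : ℝ} (hY : 0 ≤ Y) (c : ℂ) :
    1 ≤ boxThetaSum m Q Y c := by
  have : NeZero m := ⟨hm⟩
  have hzero : differencedCoeff c (0 : Fin m → GaussianInt) = 0 := by
    simp [differencedCoeff, hm]
  refine le_trans ?_ (ENNReal.le_tsum ⟨0, fun _ ↦ by simpa [gN] using hY⟩)
  simpa [hzero] using one_le_gaussianTheta_zero (Real.pi * Q)

lemma finite_setOf_gN_le (Y : ℝ) : {z : GaussianInt | gN z ≤ Y}.Finite := by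
  have hlim := (summable_gaussian one_pos 0).tendsto_cofinite_zero
  have hev := hlim.eventually_lt_const (Real.exp_pos (-Y))
  refine (Filter.eventually_cofinite.1 hev).subset fun z hz ↦ ?_
  simpa [gaussian, ← gN_eq_cN] using hz

lemma boxThetaSum_eq_ofReal_tsum (m : ℕ) {Q : ℝ} (hQ : 0 < Q) (Y : ℝ) (c : ℂ) :
    boxThetaSum m Q Y c =
      ENNReal.ofReal (∑' α : {α : Fin m → GaussianInt // ∀ v, gN (α v) ≤ Y}, ∑' β : GaussianInt,
        Real.exp (-Real.pi * Q * cN (β - conj (differencedCoeff c α.1)))) := by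
  have : Finite {α : Fin m → GaussianInt // ∀ v, gN (α v) ≤ Y} :=
    (Set.Finite.pi' fun _ ↦ finite_setOf_gN_le Y).to_subtype
  rw [ENNReal.ofReal_tsum_of_nonneg (fun _ ↦ tsum_nonneg fun _ ↦ (Real.exp_pos _).le)
    (Summable.of_finite), boxThetaSum]
  simp only [gaussianTheta_eq_ofReal_tsum (mul_pos Real.pi_pos hQ), gaussian, neg_mul,
    sub_eq_add_neg]

lemma enorm_smoothedSum_polyPhase_pow_le_box (m : ℕ) {c Q : ℝ}
    (hcm : 2 ^ m * (4 * c) = Real.pi) (hQ : 1 ≤ Q) (Y : ℝ) (a : ℂ) {P : ℂ[X]}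
    (hP : P.natDegree ≤ m + 1) :
    ‖smoothedSum (Real.pi / (2 ^ m * Q)) a (polyPhase P)‖ₑ ^ 2 ^ m ≤
      gaussianTheta (c / Q) 0 ^ (2 ^ m - (m + 1)) * (ENNReal.ofReal Q *
        (boxThetaSum m Q Y (P.coeff (m + 1)) + ENNReal.ofReal (Real.exp (-(c / Q) * Y)) *
          gaussianTheta (c / Q) 0 ^ m * gaussianTheta Real.pi 0)) := by
  have hQ0 : 0 < Q := zero_lt_one.trans_le hQ
  have hc : 0 < c := by
    have hpi := hcm.symm ▸ Real.pi_pos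
    simpa using hpi
  have hcQ : 0 < c / Q := div_pos hc hQ0
  have hlinear : 2 ^ m * (Real.pi / (2 ^ m * Q)) = Real.pi / Q := by
    field_simp
  have hparam : c / Q + c / Q = Real.pi / (2 ^ m * Q) / 2 := by
    rw [← hcm]
    field_simp
    norm_num
  have hK (α : Fin m → GaussianInt) :
      gaussianTheta (Real.pi * Q) (-conj (differencedCoeff (P.coeff (m + 1)) α)) ≤
        gaussianTheta Real.pi 0 :=
    gaussianTheta_le_of_pi_le (le_mul_of_one_le_right Real.pi_nonneg hQ) _
  refine (enorm_smoothedSum_polyPhase_pow_le m (by positivity) hparam.le a hP).trans ?_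
  simp only [hlinear, dualTheta_pi_div, mul_left_comm _ (ENNReal.ofReal Q),
    ENNReal.tsum_mul_left]
  gcongr
  · exact gaussianTheta_anti (le_add_of_nonneg_left hcQ.le) 0
  · exact tsum_prod_gaussian_mul_le m hcQ.le hcQ.le Y hK

lemma exists_enorm_smoothedSum_polyPhase_pow_le {m : ℕ} (hm : m ≠ 0) {ε : ℝ} (hε : 0 < ε) :
    ∃ C : ℝ≥0∞, C ≠ ∞ ∧ ∀ Q : ℝ, 1 ≤ Q → ∀ (a : ℂ) (P : ℂ[X]), P.natDegree ≤ m + 1 →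
      ‖smoothedSum (Real.pi / (2 ^ m * Q)) a (polyPhase P)‖ₑ ^ 2 ^ m ≤
        C * ENNReal.ofReal Q ^ (2 ^ m - m) *
          boxThetaSum m Q (Q ^ (1 + ε)) (P.coeff (m + 1)) := by
  set c : ℝ := Real.pi / (4 * 2 ^ m) with hc_def
  have hc : 0 < c := by positivity
  have hcm : 2 ^ m * (4 * c) = Real.pi := by
    rw [hc_def]
    field_simp
  have hcpi : c ≤ Real.pi :=
    div_le_self Real.pi_nonneg (one_le_mul_of_one_le_of_one_le (by norm_num)
      (one_le_pow₀ one_le_two))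
  set K := gaussianTheta Real.pi 0
  have hK : K ≠ ∞ := gaussianTheta_ne_top Real.pi_pos 0
  set M := ENNReal.ofReal (Real.pi / c) * K
  have hM : M ≠ ∞ := ENNReal.mul_ne_top ENNReal.ofReal_ne_top hK
  obtain ⟨D, hD, htail⟩ := exists_exp_mul_gaussianTheta_pow_le m hc hcpi hε
  have hexp : 2 ^ m - m = 2 ^ m - (m + 1) + 1 := by
    have := Nat.lt_two_pow_self (n := m)
    omega
  set p := 2 ^ m - (m + 1)
  refine ⟨M ^ p * (1 + D * K), ENNReal.mul_ne_top (ENNReal.pow_ne_top hM)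
    (ENNReal.add_ne_top.2 ⟨ENNReal.one_ne_top, ENNReal.mul_ne_top hD hK⟩), fun Q hQ a P hP ↦ ?_⟩
  have hbox := one_le_boxThetaSum hm Q (Y := Q ^ (1 + ε)) (by positivity) (P.coeff (m + 1))
  set B := boxThetaSum m Q (Q ^ (1 + ε)) (P.coeff (m + 1))
  have htailB : ENNReal.ofReal (Real.exp (-(c / Q) * Q ^ (1 + ε))) *
      gaussianTheta (c / Q) 0 ^ m * K ≤ D * K * B :=
    (mul_le_mul_left (htail Q hQ) K).trans (le_mul_of_one_le_right' hbox)
  calc ‖smoothedSum (Real.pi / (2 ^ m * Q)) a (polyPhase P)‖ₑ ^ 2 ^ m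
      ≤ gaussianTheta (c / Q) 0 ^ p * (ENNReal.ofReal Q * (B +
          ENNReal.ofReal (Real.exp (-(c / Q) * Q ^ (1 + ε))) * gaussianTheta (c / Q) 0 ^ m * K)) :=
        enorm_smoothedSum_polyPhase_pow_le_box m hcm hQ _ a hP
    _ ≤ (ENNReal.ofReal Q * M) ^ p * (ENNReal.ofReal Q * (B + D * K * B)) := by
        grw [htailB, gaussianTheta_div_le hc hcpi hQ 0]
    _ = M ^ p * (1 + D * K) * ENNReal.ofReal Q ^ (2 ^ m - m) * B := by
        rw [hexp]
        ring

lemma Sk_eq_smoothedSum (k : ℕ) (Q0 : ℝ) (q1 r1 j : GaussianInt) :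
    Sk k Q0 q1 r1 j = smoothedSum (Real.pi / (2 ^ (k - 1) * Q0)) 0
      (polyPhase (C ((j : ℂ) * r1 / (q1 : ℂ) ^ k) * X ^ k)) := by
  refine tsum_congr fun q ↦ ?_
  simp only [gaussian, polyPhase, add_zero, gN_eq_cN, eval_mul, eval_C, eval_pow, eval_X,
    div_mul_eq_mul_div, neg_mul, neg_div]

theorem weyl_poisson_power_sum_general {k : ℕ} (hk : 2 ≤ k) {ε : ℝ} (hε : 0 < ε) :
    ∃ C : ℝ, 0 < C ∧ ∀ Q : ℝ, 1 ≤ Q → ∀ (a : ℂ) (P : ℂ[X]), P.natDegree ≤ k →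
      ‖smoothedSum (Real.pi / (2 ^ (k - 1) * Q)) a (polyPhase P)‖ ^ 2 ^ (k - 1) ≤
        C * Q ^ ((2 : ℝ) ^ (k - 1) - k + 1) *
          ∑' α : {α : Fin (k - 1) → GaussianInt // ∀ v, gN (α v) ≤ Q ^ (1 + ε)},
            ∑' β : GaussianInt, Real.exp (-Real.pi * Q *
              cN (β - conj ((k ! : ℂ) * (∏ v, (α.1 v : ℂ)) * P.coeff k))) := by
  have hk1 : k - 1 + 1 = k := by omega
  obtain ⟨C, hC, hbound⟩ := exists_enorm_smoothedSum_polyPhase_pow_le (m := k - 1) (by omega) hε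
  refine ⟨C.toReal + 1, by positivity, fun Q hQ a P hP ↦ ?_⟩
  have hQ0 : 0 < Q := zero_lt_one.trans_le hQ
  have hexp : (2 : ℝ) ^ (k - 1) - k + 1 = (2 ^ (k - 1) - (k - 1) : ℕ) := by
    rw [Nat.cast_sub Nat.lt_two_pow_self.le, Nat.cast_sub (by omega)]
    push_cast
    ring
  have h := hbound Q hQ a P (hP.trans_eq hk1.symm)
  rw [boxThetaSum_eq_ofReal_tsum _ hQ0, ← ofReal_norm, ← ENNReal.ofReal_pow (norm_nonneg _),
    ← ENNReal.ofReal_pow hQ0.le, ← ENNReal.ofReal_toReal hC, ← ENNReal.ofReal_mul (by positivity),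
    ← ENNReal.ofReal_mul (by positivity), ENNReal.ofReal_le_ofReal_iff (by positivity)] at h
  simp only [differencedCoeff, hk1] at h
  rw [hexp, Real.rpow_natCast]
  refine h.trans ?_
  gcongr
  exact le_add_of_nonneg_right zero_le_one

end WeylPoisson

/-- **Weyl differencing plus Poisson summation for the `k`-th power sums**
(inequality (42) of the paper). For `k ≥ 2`, `κ = 2^{k-1}`, `ε ∈ (0,1)` there is
`C(k,ε)` such that for `Q₀ ≥ 2`, `q₁ ≠ 0` and `r₁, j ∈ ℤ[i]`,
`|S_k(q₁,r₁,j)|^κ ≤ C Q₀^{κ-k+1+ε} ∑_{α, N(α_v) ≤ Q₀^{1+ε}} ∑_{β ∈ ℤ[i]}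
   exp(-π Q₀ N(β - conj(k!α₁⋯α_{k-1} j r₁/q₁^k)))`. -/
theorem weyl_poisson_power_sum :
    ∀ k : ℕ, 2 ≤ k → ∀ ε : ℝ, 0 < ε → ε < 1 → ∃ C : ℝ, 0 < C ∧
      ∀ Q0 : ℝ, 2 ≤ Q0 → ∀ q1 : GaussianInt, q1 ≠ 0 → ∀ r1 j : GaussianInt,
      ‖Sk k Q0 q1 r1 j‖ ^ (2 ^ (k - 1))
        ≤ C * Q0 ^ (((2 : ℝ) ^ (k - 1) : ℝ) - k + 1 + ε) *
          ∑' α : {α : Fin (k - 1) → GaussianInt // ∀ v, gN (α v) ≤ Q0 ^ ((1 : ℝ) + ε)},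
            ∑' β : GaussianInt,
              Real.exp (-Real.pi * Q0 *
                cN ((β : ℂ) - (starRingEnd ℂ)
                  ((Nat.factorial k : ℂ)
                    * (∏ v, (((α : Fin (k - 1) → GaussianInt) v : GaussianInt) : ℂ))
                    * (j : ℂ) * (r1 : ℂ) / (q1 : ℂ) ^ k))) := by
  intro k hk ε hε _
  obtain ⟨C, hC, hbound⟩ := weyl_poisson_power_sum_general hk hε
  refine ⟨C, hC, fun Q0 hQ q1 _ r1 j ↦ ?_⟩
  have hQ1 : 1 ≤ Q0 := one_le_two.trans hQ
  have h := hbound Q0 hQ1 0 _ (Polynomial.natDegree_C_mul_X_pow_le ((j : ℂ) * r1 / (q1 : ℂ) ^ k) k)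
  simp only [Polynomial.coeff_C_mul_X_pow, if_true, ← Sk_eq_smoothedSum, ← mul_div_assoc,
    ← mul_assoc] at h
  refine h.trans (mul_le_mul_of_nonneg_right ?_
    (tsum_nonneg fun _ ↦ tsum_nonneg fun _ ↦ (Real.exp_pos _).le))
  exact mul_le_mul_of_nonneg_left (Real.rpow_le_rpow_of_exponent_le hQ1 (by linarith)) hC.le
end
end

section
/- Let k ≥ 2, κ := 2^{k−1}, ε ∈ (0,1), let N ≥ 2 and Q0 ≥ 2 be real numbers with Q0 > N^{1/(2k)}, let q1 ∈ ℤ[i] with Q0/2^{1/k} < N(q1) ≤ Q0, and let r1 ∈ ℤ[i] be coprime to q1. Set S_k(q1,r1,j) := ∑_{q∈ℤ[i]} exp(−π N(q)/(κ Q0)) · e(Re(j r1 q^k / q1^k)). Then ∑_{j∈ℤ[i]\{0}, N(j) ≤ N·Q0^{ε−k}} |S_k(q1,r1,j)|^κ ≤ C(k,ε) · (Q0 N)^ε · (Q0^κ + N·Q0^{κ−k−1}), where C(k,ε) depends only on k and ε. -/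
noncomputable section

/-!
Write `k = m + 1`. After `m` Weyl differencing steps, `|S_k(q, r, j)|^(2^m)` is bounded by an
average over shifts `h₁, …, h_m` of linear sums, and Poisson summation turns each of these into
the mass that a Gaussian of variance about `1/Q` centred at `n r/q^k`, `n = k! j h₁⋯h_m`, gives to
`ℤ[i]`. The shifts carry Gaussian weights, so those with `N(h) > Q^(1+η)` are negligible, and only
a proportion about `1/Q` of the tuples has some `h_i = 0`. For the remaining ones `n ≠ 0`, so by the
divisor bound few tuples `(j, h₁, …, h_m)` give the same `n`. Finally, since `r` and `q` are
coprime, each Gaussian integer `b` is `ν q^k - n r` for at most one `ν` per `n`, with `n` confined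
to a single residue class modulo `q^k`; hence the sum over `n` and `ν` is a Gaussian sum over `b`
times the number of such `n`.
-/

namespace GaussPowerSum

open Real Filter Polynomial
open scoped ENNReal

section Character

lemma e_eq_fourierChar (t : ℝ) : e t = (Real.fourierChar t : ℂ) := by
  rw [e, Real.fourierChar_apply]
  push_cast
  ring_nf

lemma e_add (s t : ℝ) : e (s + t) = e s * e t := by
  simp only [e_eq_fourierChar, AddChar.map_add_eq_mul, Circle.coe_mul]

lemma conj_e (t : ℝ) : (starRingEnd ℂ) (e t) = e (-t) := by
  rw [e_eq_fourierChar, e_eq_fourierChar, AddChar.map_neg_eq_inv, Circle.coe_inv_eq_conj]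

lemma norm_e (t : ℝ) : ‖e t‖ = 1 := by
  rw [e_eq_fourierChar, Circle.norm_coe]

lemma norm_ofReal_mul_e {w : ℝ} (hw : 0 ≤ w) (t : ℝ) : ‖(w : ℂ) * e t‖ = w := by
  rw [norm_mul, norm_e, mul_one, Complex.norm_of_nonneg hw]

end Character

section IntegerGaussians

lemma summable_exp_neg_mul_int_sub_sq {a : ℝ} (ha : 0 < a) (x : ℝ) :
    Summable fun n : ℤ => exp (-a * ((n : ℝ) - x) ^ 2) := by
  refine (HurwitzZeta.hasSum_int_evenKernel (-x) (div_pos ha pi_pos)).summable.congr fun n => ?_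
  congr 1
  field_simp
  ring

lemma tsum_exp_neg_mul_sub_sq_mul_e {Q : ℝ} (hQ : 0 < Q) (x y : ℝ) :
    ∑' n : ℤ, ((exp (-(π / Q) * ((n : ℝ) - x) ^ 2) : ℝ) : ℂ) * e (y * n) =
      √Q * ∑' n : ℤ, ((exp (-(π * Q) * ((n : ℝ) - y) ^ 2) : ℝ) : ℂ) * e (x * (y - n)) := by
  have hQ' : (Q : ℂ) ≠ 0 := by exact_mod_cast hQ.ne'
  have hpoisson := Complex.tsum_exp_neg_quadratic (a := (Q : ℂ)⁻¹)
    (by rw [← Complex.ofReal_inv, Complex.ofReal_re]; positivity) (x / Q + y * Complex.I)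
  have hsqrt : 1 / ((Q : ℂ)⁻¹) ^ (1 / 2 : ℂ) = √Q := by
    rw [Complex.inv_cpow _ _ (by simp [Complex.arg_ofReal_of_nonneg hQ.le, pi_pos.ne]),
      one_div, inv_inv, Real.sqrt_eq_rpow, Complex.ofReal_cpow hQ.le]
    push_cast
    rfl
  have hleft (n : ℤ) : ((exp (-(π / Q) * ((n : ℝ) - x) ^ 2) : ℝ) : ℂ) * e (y * n) =
      Complex.exp (-(π / Q) * x ^ 2) *
        Complex.exp (-π * (Q : ℂ)⁻¹ * n ^ 2 + 2 * π * (x / Q + y * Complex.I) * n) := by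
    rw [e, Complex.ofReal_exp, ← Complex.exp_add, ← Complex.exp_add]
    congr 1
    push_cast
    field_simp
    ring
  have hright (n : ℤ) : ((exp (-(π * Q) * ((n : ℝ) - y) ^ 2) : ℝ) : ℂ) * e (x * (y - n)) =
      Complex.exp (-(π / Q) * x ^ 2) *
        Complex.exp (-π / (Q : ℂ)⁻¹ * (n + Complex.I * (x / Q + y * Complex.I)) ^ 2) := by
    rw [e, Complex.ofReal_exp, ← Complex.exp_add, ← Complex.exp_add]
    congr 1
    push_cast
    field_simp
    linear_combination (x ^ 2 + 2 * (Q * (n - y) + Complex.I * x) * (Q * y) +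
      Q ^ 2 * y ^ 2 * (Complex.I ^ 2 + 1) : ℂ) * Complex.I_sq
  simp_rw [hleft, hright, tsum_mul_left, hpoisson, hsqrt]
  ring

lemma norm_tsum_exp_neg_mul_sub_sq_mul_e_le {Q : ℝ} (hQ : 0 < Q) (x y : ℝ) :
    ‖∑' n : ℤ, ((exp (-(π / Q) * ((n : ℝ) - x) ^ 2) : ℝ) : ℂ) * e (y * n)‖
      ≤ √Q * ∑' n : ℤ, exp (-(π * Q) * ((n : ℝ) - y) ^ 2) := by
  rw [tsum_exp_neg_mul_sub_sq_mul_e hQ, norm_mul, Complex.norm_of_nonneg (sqrt_nonneg Q)]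
  have hnorm (n : ℤ) : ‖((exp (-(π * Q) * ((n : ℝ) - y) ^ 2) : ℝ) : ℂ) * e (x * (y - n))‖ =
      exp (-(π * Q) * ((n : ℝ) - y) ^ 2) := norm_ofReal_mul_e (exp_pos _).le _
  have hsummable := summable_exp_neg_mul_int_sub_sq (mul_pos pi_pos hQ) y
  gcongr
  simpa only [hnorm] using norm_tsum_le_tsum_norm (hsummable.congr fun n => (hnorm n).symm)

/-- The theta constant `∑ₙ exp(-π n²)`, in terms of which all Gaussian masses are bounded. -/
def theta : ℝ := ∑' n : ℤ, exp (-π * (n : ℝ) ^ 2)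

lemma summable_theta : Summable fun n : ℤ => exp (-π * (n : ℝ) ^ 2) := by
  simpa only [sub_zero] using summable_exp_neg_mul_int_sub_sq pi_pos 0

lemma theta_pos : 0 < theta :=
  summable_theta.tsum_pos (fun _ => (exp_pos _).le) 0 (exp_pos _)

lemma tsum_exp_neg_mul_int_sub_sq_le {Q : ℝ} (hQ : 1 ≤ Q) (x : ℝ) :
    ∑' n : ℤ, exp (-(π / Q) * ((n : ℝ) - x) ^ 2) ≤ √Q * theta := by
  have hQ0 : 0 < Q := by linarith
  have hdual : ∑' n : ℤ, exp (-(π * Q) * (n : ℝ) ^ 2) ≤ theta := by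
    refine Summable.tsum_le_tsum (fun n => exp_le_exp.2 ?_)
      (by simpa only [sub_zero] using summable_exp_neg_mul_int_sub_sq (mul_pos pi_pos hQ0) 0)
      summable_theta
    nlinarith [mul_nonneg (mul_nonneg pi_pos.le (sub_nonneg.2 hQ)) (sq_nonneg (n : ℝ))]
  have hzero : e 0 = 1 := by simp [e]
  have hpoisson := norm_tsum_exp_neg_mul_sub_sq_mul_e_le hQ0 x 0
  simp only [zero_mul, hzero, mul_one, sub_zero, ← Complex.ofReal_tsum] at hpoisson
  calc ∑' n : ℤ, exp (-(π / Q) * ((n : ℝ) - x) ^ 2)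
      ≤ ‖((∑' n : ℤ, exp (-(π / Q) * ((n : ℝ) - x) ^ 2) : ℝ) : ℂ)‖ := by
        rw [Complex.norm_real]; exact le_abs_self _
    _ ≤ √Q * ∑' n : ℤ, exp (-(π * Q) * (n : ℝ) ^ 2) := hpoisson
    _ ≤ √Q * theta := by gcongr

end IntegerGaussians

section GaussianIntegerNorm

lemma gN_eq_norm_sq (z : GaussianInt) : gN z = ‖(z : ℂ)‖ ^ 2 := by
  rw [gN, ← Complex.normSq_eq_norm_sq, Complex.normSq_apply, GaussianInt.intCast_re,
    GaussianInt.intCast_im]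
  ring

lemma gN_eq_natAbs_norm (z : GaussianInt) : gN z = (z.norm.natAbs : ℝ) := by
  rw [gN_eq_norm_sq, ← Complex.normSq_eq_norm_sq, ← GaussianInt.intCast_real_norm,
    GaussianInt.natCast_natAbs_norm]

lemma gN_nonneg (z : GaussianInt) : 0 ≤ gN z := by
  rw [gN_eq_norm_sq]; positivity

lemma gN_pos {z : GaussianInt} (hz : z ≠ 0) : 0 < gN z := by
  rw [gN_eq_natAbs_norm]
  exact_mod_cast Int.natAbs_pos.2 (GaussianInt.norm_pos.2 hz).ne'

lemma one_le_gN {z : GaussianInt} (hz : z ≠ 0) : 1 ≤ gN z := by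
  have hpos := gN_pos hz
  rw [gN_eq_natAbs_norm] at hpos ⊢
  exact_mod_cast hpos

lemma gN_mul (a b : GaussianInt) : gN (a * b) = gN a * gN b := by
  simp only [gN_eq_norm_sq, GaussianInt.toComplex_mul, norm_mul, mul_pow]

lemma gN_pow (a : GaussianInt) (n : ℕ) : gN (a ^ n) = gN a ^ n := by
  simp only [gN_eq_norm_sq, map_pow, norm_pow, ← pow_mul, mul_comm]

lemma gN_natCast (n : ℕ) : gN n = (n : ℝ) ^ 2 := by
  simp only [gN_eq_norm_sq, map_natCast, Complex.norm_natCast]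

lemma gN_sub_le (a b : GaussianInt) : gN (a - b) ≤ 2 * (gN a + gN b) := by
  simp only [gN, Zsqrtd.re_sub, Zsqrtd.im_sub, Int.cast_sub]
  nlinarith [sq_nonneg ((a.re : ℝ) + b.re), sq_nonneg ((a.im : ℝ) + b.im)]

/-- The Gaussian integers of norm at most `X` (so of absolute value at most `√X`). -/
def normBall (X : ℝ) : Set GaussianInt := {z | gN z ≤ X}

/-- The nonzero Gaussian integers of norm at most `X`. -/
def puncturedNormBall (X : ℝ) : Set GaussianInt := {z | z ≠ 0 ∧ gN z ≤ X}

lemma puncturedNormBall_subset_normBall (X : ℝ) : puncturedNormBall X ⊆ normBall X :=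
  fun _ hz => hz.2

lemma normBall_mono {X Y : ℝ} (h : X ≤ Y) : normBall X ⊆ normBall Y :=
  fun _ hz => le_trans hz h

lemma puncturedNormBall_mono {X Y : ℝ} (h : X ≤ Y) : puncturedNormBall X ⊆ puncturedNormBall Y :=
  fun _ hz => ⟨hz.1, hz.2.trans h⟩

end GaussianIntegerNorm

section GaussianMass

/-- Gaussian integers as pairs of integers, used to factor planar Gaussian sums. -/
def intProdEquiv : ℤ × ℤ ≃ GaussianInt where
  toFun p := ⟨p.1, p.2⟩
  invFun z := (z.re, z.im)
  left_inv _ := rfl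
  right_inv _ := rfl

lemma exp_neg_mul_norm_intProdEquiv_sub_sq (a : ℝ) (p : ℤ × ℤ) (x : ℂ) :
    exp (-a * ‖(intProdEquiv p : ℂ) - x‖ ^ 2) =
      exp (-a * ((p.1 : ℝ) - x.re) ^ 2) * exp (-a * ((p.2 : ℝ) - x.im) ^ 2) := by
  rw [← Real.exp_add, ← Complex.normSq_eq_norm_sq, Complex.normSq_apply, Complex.sub_re,
    Complex.sub_im, ← GaussianInt.intCast_re, ← GaussianInt.intCast_im]
  congr 1
  simp only [intProdEquiv, Equiv.coe_fn_mk]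
  ring

lemma summable_exp_neg_mul_norm_sub_sq {a : ℝ} (ha : 0 < a) (x : ℂ) :
    Summable fun q : GaussianInt => exp (-a * ‖(q : ℂ) - x‖ ^ 2) := by
  rw [← intProdEquiv.summable_iff]
  refine ((summable_exp_neg_mul_int_sub_sq ha x.re).mul_of_nonneg
    (summable_exp_neg_mul_int_sub_sq ha x.im) (fun _ => (exp_pos _).le)
    fun _ => (exp_pos _).le).congr fun p => ?_
  exact (exp_neg_mul_norm_intProdEquiv_sub_sq a p x).symm

lemma tsum_exp_neg_mul_norm_sub_sq {a : ℝ} (ha : 0 < a) (x : ℂ) :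
    ∑' q : GaussianInt, exp (-a * ‖(q : ℂ) - x‖ ^ 2) =
      (∑' n : ℤ, exp (-a * ((n : ℝ) - x.re) ^ 2)) *
        ∑' n : ℤ, exp (-a * ((n : ℝ) - x.im) ^ 2) := by
  rw [← intProdEquiv.tsum_eq, tsum_mul_tsum_of_summable_norm
    (summable_exp_neg_mul_int_sub_sq ha x.re).norm (summable_exp_neg_mul_int_sub_sq ha x.im).norm]
  simp_rw [exp_neg_mul_norm_intProdEquiv_sub_sq]

/-- The total mass `∑_q exp(-a |q - x|²)` of a Gaussian centred at `x` on the lattice `ℤ[i]`. -/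
def gaussMass (a : ℝ) (x : ℂ) : ℝ≥0∞ :=
  ∑' q : GaussianInt, ENNReal.ofReal (exp (-a * ‖(q : ℂ) - x‖ ^ 2))

lemma gaussMass_eq_ofReal {a : ℝ} (ha : 0 < a) (x : ℂ) :
    gaussMass a x = ENNReal.ofReal (∑' q : GaussianInt, exp (-a * ‖(q : ℂ) - x‖ ^ 2)) :=
  (ENNReal.ofReal_tsum_of_nonneg (fun _ => (exp_pos _).le)
    (summable_exp_neg_mul_norm_sub_sq ha x)).symm

lemma gaussMass_anti {a b : ℝ} (h : a ≤ b) (x : ℂ) : gaussMass b x ≤ gaussMass a x := by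
  unfold gaussMass
  gcongr

lemma gaussMass_pi_div_le {Q : ℝ} (hQ : 1 ≤ Q) (x : ℂ) :
    gaussMass (π / Q) x ≤ ENNReal.ofReal (theta ^ 2 * Q) := by
  have hQ0 : 0 < Q := by linarith
  rw [gaussMass_eq_ofReal (by positivity), tsum_exp_neg_mul_norm_sub_sq (by positivity)]
  refine ENNReal.ofReal_le_ofReal ?_
  calc _ ≤ (√Q * theta) * (√Q * theta) :=
        mul_le_mul (tsum_exp_neg_mul_int_sub_sq_le hQ x.re)
          (tsum_exp_neg_mul_int_sub_sq_le hQ x.im) (by positivity)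
          (mul_nonneg (sqrt_nonneg Q) theta_pos.le)
    _ = theta ^ 2 * Q := by rw [mul_mul_mul_comm, Real.mul_self_sqrt hQ0.le]; ring

lemma gaussMass_le {a : ℝ} (ha : 0 < a) (x : ℂ) :
    gaussMass a x ≤ ENNReal.ofReal (theta ^ 2 * (1 + π / a)) := by
  have hle : π / (1 + π / a) ≤ a := by
    rw [div_le_iff₀ (by positivity), mul_add, mul_div_cancel₀ _ ha.ne']
    linarith
  have hone : 1 ≤ 1 + π / a := by linarith [div_pos pi_pos ha]
  exact (gaussMass_anti hle x).trans (gaussMass_pi_div_le hone x)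

end GaussianMass

section LatticePoints

/-- The constant in the bounds for the number of Gaussian integers in a disc, obtained by
majorizing the indicator function of the disc by a Gaussian. -/
def latticeConst : ℝ := 2 * exp π * theta ^ 2

lemma latticeConst_pos : 0 < latticeConst :=
  mul_pos (by positivity) (pow_pos theta_pos 2)

lemma encard_normBall_le {X : ℝ} (hX : 0 ≤ X) :
    ((normBall X).encard : ℝ≥0∞) ≤ ENNReal.ofReal (latticeConst * (1 + X)) := by
  have hmass (q : normBall X) : ENNReal.ofReal (exp (-π)) ≤
      ENNReal.ofReal (exp (-(π / (1 + X)) * ‖((q : GaussianInt) : ℂ) - 0‖ ^ 2)) := by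
    have hq : gN q / (1 + X) ≤ 1 := by
      rw [div_le_one (by positivity)]
      linarith [show gN q ≤ X from q.2]
    gcongr
    rw [sub_zero, ← gN_eq_norm_sq, neg_mul, div_mul_eq_mul_div, mul_div_assoc]
    exact neg_le_neg (mul_le_of_le_one_right pi_pos.le hq)
  have hcount : ((normBall X).encard : ℝ≥0∞) * ENNReal.ofReal (exp (-π)) ≤
      ENNReal.ofReal (theta ^ 2 * (1 + X)) := calc
    _ = ∑' _ : normBall X, ENNReal.ofReal (exp (-π)) := (ENNReal.tsum_set_const _ _).symm
    _ ≤ ∑' q : normBall X,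
        ENNReal.ofReal (exp (-(π / (1 + X)) * ‖((q : GaussianInt) : ℂ) - 0‖ ^ 2)) :=
      ENNReal.tsum_le_tsum hmass
    _ ≤ gaussMass (π / (1 + X)) 0 :=
      ENNReal.tsum_comp_le_tsum_of_injective Subtype.val_injective _
    _ ≤ ENNReal.ofReal (theta ^ 2 * (1 + X)) := gaussMass_pi_div_le (by linarith) 0
  calc ((normBall X).encard : ℝ≥0∞)
      = (normBall X).encard * ENNReal.ofReal (exp (-π)) * ENNReal.ofReal (exp π) := by
        rw [mul_assoc, ← ENNReal.ofReal_mul (exp_pos _).le, ← Real.exp_add, neg_add_cancel,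
          Real.exp_zero, ENNReal.ofReal_one, mul_one]
    _ ≤ ENNReal.ofReal (theta ^ 2 * (1 + X)) * ENNReal.ofReal (exp π) := by gcongr
    _ = ENNReal.ofReal (theta ^ 2 * (1 + X) * exp π) := by
        rw [← ENNReal.ofReal_mul (by positivity)]
    _ ≤ ENNReal.ofReal (latticeConst * (1 + X)) := by
        refine ENNReal.ofReal_le_ofReal ?_
        have : 0 ≤ theta ^ 2 * (1 + X) * exp π := by positivity
        rw [latticeConst]
        linarith

lemma finite_normBall (X : ℝ) : (normBall X).Finite := by
  refine Set.Finite.subset (Set.encard_ne_top_iff.1 fun htop => ?_)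
    (normBall_mono (le_max_left X 0))
  have hcard := encard_normBall_le (le_max_right X 0)
  rw [htop, ENat.toENNReal_top] at hcard
  exact ENNReal.ofReal_ne_top (top_le_iff.1 hcard)

lemma encard_puncturedNormBall_le (R : ℝ) :
    ((puncturedNormBall R).encard : ℝ≥0∞) ≤ ENNReal.ofReal (2 * latticeConst * R) := by
  rcases lt_or_ge R 1 with hR | hR
  · have hempty : puncturedNormBall R = ∅ :=
      Set.eq_empty_of_forall_notMem fun z hz => (one_le_gN hz.1).not_gt (hz.2.trans_lt hR)
    simp only [hempty, Set.encard_empty, ENat.toENNReal_zero, zero_le]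
  · have hmono : ((puncturedNormBall R).encard : ℝ≥0∞) ≤ (normBall R).encard := by
      gcongr
      exact puncturedNormBall_subset_normBall R
    refine (hmono.trans (encard_normBall_le (by linarith))).trans (ENNReal.ofReal_le_ofReal ?_)
    nlinarith [latticeConst_pos]

end LatticePoints

section WeylDifferencing

lemma enorm_tsum_sq_le_tsum_enorm_tsum_star_mul {G A : Type*} [AddGroup G] [NormedRing A]
    [StarRing A] [CStarRing A] [CompleteSpace A] {f : G → A} (hf : Summable fun q => ‖f q‖) :
    ‖∑' q, f q‖ₑ ^ 2 ≤ ∑' h, ‖∑' q, star (f q) * f (q + h)‖ₑ := by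
  have hstar : Summable fun q => ‖star (f q)‖ := by simpa only [norm_star] using hf
  let shear : G × G ≃ G × G :=
    (Equiv.prodComm G G).trans (Equiv.prodShear (Equiv.refl G) fun q => Equiv.addLeft q)
  have hprod : Summable fun p : G × G => star (f p.1) * f p.2 :=
    summable_mul_of_summable_norm hstar hf
  have hsq : ‖∑' q, f q‖ₑ ^ 2 = ‖star (∑' q, f q) * ∑' q, f q‖ₑ := by
    rw [← ofReal_norm, ← ofReal_norm, CStarRing.norm_star_mul_self, sq,
      ENNReal.ofReal_mul (norm_nonneg _)]
  calc ‖∑' q, f q‖ₑ ^ 2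
      = ‖∑' p : G × G, star (f p.1) * f p.2‖ₑ := by
        rw [hsq, tsum_star, tsum_mul_tsum_of_summable_norm hstar hf]
    _ = ‖∑' (h : G) (q : G), star (f q) * f (q + h)‖ₑ := by
        rw [← shear.tsum_eq]
        exact congrArg _ (shear.summable_iff.2 hprod).tsum_prod
    _ ≤ ∑' h, ‖∑' q, star (f q) * f (q + h)‖ₑ := enorm_tsum_le_tsum_enorm

lemma norm_add_sub_sq_add_norm_sub_sq {E : Type*} [NormedAddCommGroup E]
    [InnerProductSpace ℝ E] (x q h : E) :
    ‖q + h - x‖ ^ 2 + ‖q - x‖ ^ 2 =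
      2⁻¹ * ‖h‖ ^ 2 + 2 * ‖q - (x - (2⁻¹ : ℝ) • h)‖ ^ 2 := by
  have hparallelogram := parallelogram_law_with_norm ℝ (q - (x - (2⁻¹ : ℝ) • h)) ((2⁻¹ : ℝ) • h)
  rw [show q - (x - (2⁻¹ : ℝ) • h) + (2⁻¹ : ℝ) • h = q + h - x by module,
    show q - (x - (2⁻¹ : ℝ) • h) - (2⁻¹ : ℝ) • h = q - x by module, norm_smul,
    Real.norm_of_nonneg (by norm_num)] at hparallelogram
  linarith

/-- The exponential sum over `ℤ[i]` with phase `φ`, smoothed by the Gaussian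
`exp(-a |q - x|²)`. The centre `x` is needed because differencing moves it. -/
def gaussPhaseSum (a : ℝ) (x : ℂ) (φ : GaussianInt → ℝ) : ℂ :=
  ∑' q : GaussianInt, ((exp (-a * ‖(q : ℂ) - x‖ ^ 2) : ℝ) : ℂ) * e (φ q)

lemma enorm_gaussPhaseSum_sq_le {a : ℝ} (ha : 0 < a) (x : ℂ) (φ : GaussianInt → ℝ) :
    ‖gaussPhaseSum a x φ‖ₑ ^ 2 ≤
      ∑' h : GaussianInt, ENNReal.ofReal (exp (-(a / 2) * ‖(h : ℂ)‖ ^ 2)) *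
        ‖gaussPhaseSum (2 * a) (x - (2⁻¹ : ℝ) • (h : ℂ)) fun q => φ (q + h) - φ q‖ₑ := by
  have hsummable : Summable fun q : GaussianInt =>
      ‖((exp (-a * ‖(q : ℂ) - x‖ ^ 2) : ℝ) : ℂ) * e (φ q)‖ := by
    simpa only [norm_ofReal_mul_e (exp_pos _).le] using summable_exp_neg_mul_norm_sub_sq ha x
  refine (enorm_tsum_sq_le_tsum_enorm_tsum_star_mul hsummable).trans
    (ENNReal.tsum_le_tsum fun h => le_of_eq ?_)
  have hweight (q : GaussianInt) :
      exp (-a * ‖(q : ℂ) - x‖ ^ 2) * exp (-a * ‖((q + h : GaussianInt) : ℂ) - x‖ ^ 2) =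
        exp (-(a / 2) * ‖(h : ℂ)‖ ^ 2) *
          exp (-(2 * a) * ‖(q : ℂ) - (x - (2⁻¹ : ℝ) • (h : ℂ))‖ ^ 2) := by
    rw [← Real.exp_add, ← Real.exp_add, GaussianInt.toComplex_add]
    congr 1
    linear_combination (-a) * norm_add_sub_sq_add_norm_sub_sq x (q : ℂ) (h : ℂ)
  have hterm (q : GaussianInt) :
      star (((exp (-a * ‖(q : ℂ) - x‖ ^ 2) : ℝ) : ℂ) * e (φ q)) *
          (((exp (-a * ‖((q + h : GaussianInt) : ℂ) - x‖ ^ 2) : ℝ) : ℂ) * e (φ (q + h))) =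
        ((exp (-(a / 2) * ‖(h : ℂ)‖ ^ 2) : ℝ) : ℂ) *
          (((exp (-(2 * a) * ‖(q : ℂ) - (x - (2⁻¹ : ℝ) • (h : ℂ))‖ ^ 2) : ℝ) : ℂ) *
            e (φ (q + h) - φ q)) := by
    rw [star_mul', ← starRingEnd_apply, ← starRingEnd_apply, Complex.conj_ofReal, conj_e,
      sub_eq_add_neg (φ (q + h)), e_add, mul_mul_mul_comm, ← Complex.ofReal_mul, hweight,
      Complex.ofReal_mul]
    ring
  rw [tsum_congr hterm, tsum_mul_left, enorm_mul, ← ofReal_norm,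
    Complex.norm_of_nonneg (exp_pos _).le, gaussPhaseSum]

lemma tsum_mul_pow_le_tsum_pow_mul_tsum {ι : Type*} (w f : ι → ℝ≥0∞) (n : ℕ) :
    (∑' i, w i * f i) ^ (n + 1) ≤ (∑' i, w i) ^ n * ∑' i, w i * f i ^ (n + 1) := by
  set p : ℝ := ((n + 1 : ℕ) : ℝ) with hp
  have hp1 : 1 ≤ p := by rw [hp]; exact_mod_cast n.succ_pos
  have hp0 : p ≠ 0 := by positivity
  have hweight : 0 ≤ 1 - p⁻¹ := sub_nonneg.2 (inv_le_one_of_one_le₀ hp1)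
  have hjensen : ∑' i, w i * f i ≤
      (∑' i, w i) ^ (1 - p⁻¹) * (∑' i, w i * f i ^ p) ^ p⁻¹ := by
    rw [ENNReal.tsum_eq_iSup_sum]
    refine iSup_le fun s => (ENNReal.inner_le_weight_mul_Lp_of_nonneg s hp1 w f).trans ?_
    gcongr
    · exact ENNReal.sum_le_tsum s
    · exact ENNReal.sum_le_tsum s
  calc (∑' i, w i * f i) ^ (n + 1)
      ≤ ((∑' i, w i) ^ (1 - p⁻¹) * (∑' i, w i * f i ^ p) ^ p⁻¹) ^ (n + 1) := by gcongr
    _ = (∑' i, w i) ^ ((1 - p⁻¹) * p) * (∑' i, w i * f i ^ p) ^ (p⁻¹ * p) := by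
        rw [← ENNReal.rpow_natCast, ← hp, ENNReal.mul_rpow_of_nonneg _ _ (by positivity),
          ← ENNReal.rpow_mul, ← ENNReal.rpow_mul]
    _ = (∑' i, w i) ^ n * ∑' i, w i * f i ^ (n + 1) := by
        rw [sub_mul, inv_mul_cancel₀ hp0, one_mul, ENNReal.rpow_one, hp, Nat.cast_succ,
          add_sub_cancel_right, ENNReal.rpow_natCast, ← Nat.cast_succ]
        simp only [ENNReal.rpow_natCast]

end WeylDifferencing

section LinearPhase

lemma gaussPhaseSum_linear {a : ℝ} (ha : 0 < a) (x α c : ℂ) :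
    gaussPhaseSum a x (fun q => (α * q + c).re) = e c.re *
      ((∑' n : ℤ, ((exp (-a * ((n : ℝ) - x.re) ^ 2) : ℝ) : ℂ) * e (α.re * n)) *
        ∑' n : ℤ, ((exp (-a * ((n : ℝ) - x.im) ^ 2) : ℝ) : ℂ) * e (-α.im * n)) := by
  have hsummable (y t : ℝ) : Summable fun n : ℤ =>
      ‖((exp (-a * ((n : ℝ) - y) ^ 2) : ℝ) : ℂ) * e (t * n)‖ := by
    simpa only [norm_ofReal_mul_e (exp_pos _).le] using summable_exp_neg_mul_int_sub_sq ha y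
  rw [tsum_mul_tsum_of_summable_norm (hsummable _ _) (hsummable _ _), ← tsum_mul_left,
    gaussPhaseSum, ← intProdEquiv.tsum_eq]
  refine tsum_congr fun p => ?_
  have hphase : (α * (intProdEquiv p : ℂ) + c).re = c.re + (α.re * p.1 + -α.im * p.2) := by
    rw [Complex.add_re, Complex.mul_re, ← GaussianInt.intCast_re, ← GaussianInt.intCast_im]
    simp only [intProdEquiv, Equiv.coe_fn_mk]
    ring
  rw [exp_neg_mul_norm_intProdEquiv_sub_sq, hphase, e_add, e_add, Complex.ofReal_mul]
  ring

lemma enorm_gaussPhaseSum_linear_le {Q : ℝ} (hQ : 0 < Q) (x α c : ℂ) :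
    ‖gaussPhaseSum (π / Q) x (fun q => (α * q + c).re)‖ₑ ≤
      ENNReal.ofReal Q * gaussMass (π * Q) α := by
  have hreflect : ∑' n : ℤ, exp (-(π * Q) * ((n : ℝ) - -α.im) ^ 2) =
      ∑' n : ℤ, exp (-(π * Q) * ((n : ℝ) - α.im) ^ 2) := by
    rw [← (Equiv.neg ℤ).tsum_eq]
    refine tsum_congr fun n => ?_
    rw [Equiv.neg_apply, Int.cast_neg, neg_sub_neg, ← neg_sub, neg_sq]
  rw [gaussMass_eq_ofReal (by positivity), tsum_exp_neg_mul_norm_sub_sq (by positivity),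
    ← ENNReal.ofReal_mul hQ.le, ← ofReal_norm, gaussPhaseSum_linear (by positivity), norm_mul,
    norm_mul, norm_e, one_mul]
  refine ENNReal.ofReal_le_ofReal ?_
  calc _ ≤ (√Q * ∑' n : ℤ, exp (-(π * Q) * ((n : ℝ) - α.re) ^ 2)) *
        (√Q * ∑' n : ℤ, exp (-(π * Q) * ((n : ℝ) - -α.im) ^ 2)) :=
        mul_le_mul (norm_tsum_exp_neg_mul_sub_sq_mul_e_le hQ _ _)
          (norm_tsum_exp_neg_mul_sub_sq_mul_e_le hQ _ _) (norm_nonneg _) (by positivity)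
    _ = _ := by rw [hreflect, mul_mul_mul_comm, Real.mul_self_sqrt hQ.le]

end LinearPhase

section IteratedDifferencing

lemma natDegree_taylor_sub_le {R : Type*} [CommRing R] {p : R[X]} {n : ℕ}
    (hp : p.natDegree ≤ n + 1) (h : R) : (taylor h p - p).natDegree ≤ n := by
  rw [natDegree_le_iff_coeff_eq_zero]
  intro N hN
  have hconst : (hasseDeriv N p).natDegree ≤ 0 := by
    have := natDegree_hasseDeriv_le p N
    omega
  rw [coeff_sub, taylor_coeff, eq_C_of_natDegree_le_zero hconst, eval_C, hasseDeriv_coeff,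
    zero_add, Nat.choose_self, Nat.cast_one, one_mul, sub_self]

lemma coeff_taylor_sub {R : Type*} [CommRing R] {p : R[X]} {n : ℕ}
    (hp : p.natDegree ≤ n + 1) (h : R) :
    (taylor h p - p).coeff n = (n + 1 : ℕ) * p.coeff (n + 1) * h := by
  have hlinear : (hasseDeriv n p).natDegree ≤ 1 := by
    have := natDegree_hasseDeriv_le p n
    omega
  rw [coeff_sub, taylor_coeff, eq_X_add_C_of_natDegree_le_one hlinear]
  simp only [eval_add, eval_mul, eval_C, eval_X, hasseDeriv_coeff, zero_add, Nat.choose_self,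
    Nat.cast_one, one_mul, add_comm 1 n, Nat.choose_succ_self_right]
  ring

lemma enorm_gaussPhaseSum_eval_sq_le {a : ℝ} (ha : 0 < a) (x : ℂ) (p : ℂ[X]) :
    ‖gaussPhaseSum a x fun q => (p.eval (q : ℂ)).re‖ₑ ^ 2 ≤
      ∑' h : GaussianInt, ENNReal.ofReal (exp (-(a / 2) * ‖(h : ℂ)‖ ^ 2)) *
        ‖gaussPhaseSum (2 * a) (x - (2⁻¹ : ℝ) • (h : ℂ))
          fun q => ((taylor (h : ℂ) p - p).eval (q : ℂ)).re‖ₑ := by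
  simpa only [eval_sub, taylor_eval, Complex.sub_re, GaussianInt.toComplex_add] using
    enorm_gaussPhaseSum_sq_le ha x fun q => (p.eval (q : ℂ)).re

/-- The sums left after Weyl differencing: starting from `W`, each differencing step averages
over the shift `h` with weight `u h` and replaces the leading coefficient `α` of a polynomial of
degree `m + 2` by the leading coefficient `(m + 2) α h` of its difference. -/
def iteratedWeylSum (W : ℂ → ℝ≥0∞) (u : GaussianInt → ℝ≥0∞) : ℕ → ℂ → ℝ≥0∞
  | 0 => W
  | m + 1 => fun α => ∑' h, u h * iteratedWeylSum W u m ((m + 2 : ℕ) * α * h)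

lemma iteratedWeylSum_mono (W : ℂ → ℝ≥0∞) {u v : GaussianInt → ℝ≥0∞} (huv : u ≤ v)
    (m : ℕ) (α : ℂ) : iteratedWeylSum W u m α ≤ iteratedWeylSum W v m α := by
  induction m generalizing α with
  | zero => exact le_rfl
  | succ m ih => exact ENNReal.tsum_le_tsum fun h => mul_le_mul' (huv h) (ih _)

lemma iteratedWeylSum_le {W : ℂ → ℝ≥0∞} {B : ℝ≥0∞} (hW : ∀ α, W α ≤ B)
    (u : GaussianInt → ℝ≥0∞) (m : ℕ) (α : ℂ) :
    iteratedWeylSum W u m α ≤ (∑' h, u h) ^ m * B := by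
  induction m generalizing α with
  | zero => simpa only [pow_zero, one_mul, iteratedWeylSum] using hW α
  | succ m ih =>
    calc iteratedWeylSum W u (m + 1) α
        ≤ ∑' h, u h * ((∑' h, u h) ^ m * B) :=
          ENNReal.tsum_le_tsum fun h => mul_le_mul_right (ih _) _
      _ = (∑' h, u h) ^ (m + 1) * B := by rw [ENNReal.tsum_mul_right, pow_succ', mul_assoc]

lemma iteratedWeylSum_add_le {W : ℂ → ℝ≥0∞} {B : ℝ≥0∞} (hW : ∀ α, W α ≤ B)
    (v w : GaussianInt → ℝ≥0∞) (m : ℕ) (α : ℂ) :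
    iteratedWeylSum W (v + w) m α ≤
      m * (∑' h, w h) * (∑' h, (v + w) h) ^ (m - 1) * B + iteratedWeylSum W v m α := by
  set K := ∑' h, (v + w) h
  set T := ∑' h, w h with hT
  induction m generalizing α with
  | zero => exact le_add_self
  | succ m ih =>
    have hv : (∑' h, v h) * (m * T * K ^ (m - 1) * B) ≤ m * T * K ^ m * B := by
      rcases m with _ | m
      · simp only [Nat.cast_zero, zero_mul, mul_zero, le_refl]
      · calc _ ≤ K * ((m + 1 : ℕ) * T * K ^ m * B) :=
              mul_le_mul_left (ENNReal.tsum_le_tsum fun _ => le_self_add) _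
          _ = _ := by ring
    calc iteratedWeylSum W (v + w) (m + 1) α
        = ∑' h, (v h * iteratedWeylSum W (v + w) m ((m + 2 : ℕ) * α * h) +
            w h * iteratedWeylSum W (v + w) m ((m + 2 : ℕ) * α * h)) :=
          tsum_congr fun h => add_mul _ _ _
      _ ≤ ∑' h, (v h * (m * T * K ^ (m - 1) * B) +
            v h * iteratedWeylSum W v m ((m + 2 : ℕ) * α * h) + w h * (K ^ m * B)) := by
          refine ENNReal.tsum_le_tsum fun h => ?_
          rw [← mul_add]
          gcongr
          · exact ih _
          · exact iteratedWeylSum_le hW _ _ _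
      _ = (∑' h, v h) * (m * T * K ^ (m - 1) * B) + iteratedWeylSum W v (m + 1) α +
            T * (K ^ m * B) := by
          rw [ENNReal.tsum_add, ENNReal.tsum_add, ENNReal.tsum_mul_right, ENNReal.tsum_mul_right,
            hT, iteratedWeylSum]
      _ ≤ m * T * K ^ m * B + iteratedWeylSum W v (m + 1) α + T * (K ^ m * B) := by gcongr
      _ = (m + 1 : ℕ) * T * K ^ (m + 1 - 1) * B + iteratedWeylSum W v (m + 1) α := by
          rw [Nat.add_sub_cancel]
          push_cast
          ring

lemma pow_two_pow_succ_le_of_sq_le {ι : Type*} {A C : ℝ≥0∞} {u S F : ι → ℝ≥0∞} {m : ℕ}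
    (hA : A ^ 2 ≤ ∑' i, u i * S i) (hS : ∀ i, S i ^ 2 ^ m ≤ C * F i) :
    A ^ 2 ^ (m + 1) ≤ (∑' i, u i) ^ (2 ^ m - 1) * (C * ∑' i, u i * F i) := by
  have hexponent : 2 ^ m - 1 + 1 = 2 ^ m := Nat.sub_add_cancel Nat.one_le_two_pow
  calc A ^ 2 ^ (m + 1) = (A ^ 2) ^ 2 ^ m := by rw [pow_succ', pow_mul]
    _ ≤ (∑' i, u i * S i) ^ 2 ^ m := by gcongr
    _ ≤ (∑' i, u i) ^ (2 ^ m - 1) * ∑' i, u i * S i ^ 2 ^ m := by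
        simpa only [hexponent] using tsum_mul_pow_le_tsum_pow_mul_tsum u S (2 ^ m - 1)
    _ ≤ (∑' i, u i) ^ (2 ^ m - 1) * ∑' i, C * (u i * F i) := by
        refine mul_le_mul_right (ENNReal.tsum_le_tsum fun i => ?_) _
        rw [mul_left_comm]
        exact mul_le_mul_right (hS i) _
    _ = (∑' i, u i) ^ (2 ^ m - 1) * (C * ∑' i, u i * F i) := by rw [ENNReal.tsum_mul_left]

lemma enorm_gaussPhaseSum_eval_pow_le {Q : ℝ} (hQ : 0 < Q) {u : GaussianInt → ℝ≥0∞} {m : ℕ}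
    (hu : ∀ h : GaussianInt,
      ENNReal.ofReal (exp (-(π / (2 ^ (m + 1) * Q)) * ‖(h : ℂ)‖ ^ 2)) ≤ u h)
    (x : ℂ) {p : ℂ[X]} (hp : p.natDegree ≤ m + 1) :
    ‖gaussPhaseSum (π / (2 ^ m * Q)) x fun q => (p.eval (q : ℂ)).re‖ₑ ^ 2 ^ m ≤
      ENNReal.ofReal Q * (∑' h, u h) ^ (2 ^ m - (m + 1)) *
        iteratedWeylSum (gaussMass (π * Q)) u m (p.coeff (m + 1)) := by
  induction m generalizing x p with
  | zero =>
    rw [eq_X_add_C_of_natDegree_le_one hp]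
    simpa [iteratedWeylSum] using enorm_gaussPhaseSum_linear_le hQ x (p.coeff 1) (p.coeff 0)
  | succ m ih =>
    have hu' (h : GaussianInt) :
        ENNReal.ofReal (exp (-(π / (2 ^ (m + 1) * Q)) * ‖(h : ℂ)‖ ^ 2)) ≤ u h := by
      refine le_trans ?_ (hu h)
      gcongr
      · exact one_le_two
      · exact Nat.le_succ _
    have hdouble : 2 * (π / (2 ^ (m + 1) * Q)) = π / (2 ^ m * Q) := by
      rw [pow_succ]; field_simp
    have hhalf : π / (2 ^ (m + 1) * Q) / 2 = π / (2 ^ (m + 1 + 1) * Q) := by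
      rw [pow_succ _ (m + 1)]; field_simp
    have hdiff := enorm_gaussPhaseSum_eval_sq_le (a := π / (2 ^ (m + 1) * Q)) (by positivity) x p
    simp only [hdouble, hhalf] at hdiff
    have hstep := pow_two_pow_succ_le_of_sq_le
      (hdiff.trans (ENNReal.tsum_le_tsum fun h => mul_le_mul_left (hu h) _))
      fun h => ih hu' _ (natDegree_taylor_sub_le hp _)
    have hexponent : 2 ^ (m + 1) - (m + 1 + 1) = 2 ^ m - 1 + (2 ^ m - (m + 1)) := by
      have : m + 1 ≤ 2 ^ m := Nat.lt_two_pow_self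
      rw [pow_succ]
      omega
    refine hstep.trans (le_of_eq ?_)
    rw [hexponent, pow_add _ (2 ^ m - 1)]
    simp only [coeff_taylor_sub hp, iteratedWeylSum]
    ring

end IteratedDifferencing

section Counting

lemma tsum_comp_le_mul_tsum {ι κ : Type*} {g : ι → κ} {D : ℝ≥0∞}
    (hD : ∀ n, ((g ⁻¹' {n}).encard : ℝ≥0∞) ≤ D) (f : κ → ℝ≥0∞) :
    ∑' i, f (g i) ≤ D * ∑' n, f n := by
  rw [← ENNReal.tsum_fiberwise _ g, ← ENNReal.tsum_mul_left]
  refine ENNReal.tsum_le_tsum fun n => ?_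
  calc ∑' i : g ⁻¹' {n}, f (g i) = ∑' _ : g ⁻¹' {n}, f n := tsum_congr fun i => congrArg f i.2
    _ = (g ⁻¹' {n}).encard * f n := ENNReal.tsum_set_const _ _
    _ ≤ D * f n := mul_le_mul_left (hD n) _

lemma encard_normBall_dvd_sub_le {Q : GaussianInt} (hQ : Q ≠ 0) {M : ℝ} {n₀ : GaussianInt}
    (hn₀ : n₀ ∈ normBall M) :
    {n ∈ normBall M | Q ∣ n - n₀}.encard ≤ (normBall (4 * M / gN Q)).encard := by
  refine le_trans (Set.encard_mono ?_) (Set.encard_image_le (fun t => n₀ + Q * t) _)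
  rintro n ⟨hn, t, ht⟩
  refine ⟨t, ?_, by beta_reduce; rw [← ht, add_sub_cancel]⟩
  have hsub := gN_sub_le n n₀
  rw [ht, gN_mul] at hsub
  have hn' : gN n ≤ M := hn
  have hn₀' : gN n₀ ≤ M := hn₀
  change gN t ≤ 4 * M / gN Q
  rw [le_div_iff₀ (gN_pos hQ)]
  linarith

lemma tsum_gaussMass_mul_div_le (a : ℝ) {r Q : GaussianInt} (hQ : Q ≠ 0) (hrQ : IsCoprime r Q)
    (M : ℝ) :
    ∑' n : normBall M, gaussMass a ((n : GaussianInt) * (r / Q) : ℂ) ≤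
      (normBall (4 * M / gN Q)).encard * gaussMass (a / gN Q) 0 := by
  have hQ' : (Q : ℂ) ≠ 0 := GaussianInt.toComplex_eq_zero.not.2 hQ
  let g (p : normBall M × GaussianInt) : GaussianInt := p.2 * Q - p.1 * r
  have hfiber (b : GaussianInt) :
      ((g ⁻¹' {b}).encard : ℝ≥0∞) ≤ (normBall (4 * M / gN Q)).encard := by
    rcases (g ⁻¹' {b}).eq_empty_or_nonempty with hempty | ⟨p₀, hp₀⟩
    · rw [hempty, Set.encard_empty, ENat.toENNReal_zero]
      exact zero_le
    refine ENat.toENNReal_mono (le_trans ?_ (encard_normBall_dvd_sub_le hQ p₀.1.2))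
    refine Set.encard_le_encard_of_injOn (f := fun p => (p.1 : GaussianInt)) ?_ ?_
    · intro p hp
      refine ⟨p.1.2, hrQ.symm.dvd_of_dvd_mul_right ⟨p.2 - p₀.2, ?_⟩⟩
      linear_combination hp₀.trans hp.symm
    · intro p hp p' hp' hpp'
      have hfst : p.1 = p'.1 := Subtype.ext hpp'
      refine Prod.ext hfst (mul_right_cancel₀ hQ ?_)
      have hdiff : g p = g p' := hp.trans hp'.symm
      simpa only [g, hfst, sub_left_inj] using hdiff
  have hscale (n ν : GaussianInt) :
      -a * ‖(ν : ℂ) - n * (r / Q)‖ ^ 2 =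
        -(a / gN Q) * ‖((ν * Q - n * r : GaussianInt) : ℂ) - 0‖ ^ 2 := by
    have hfactor : ((ν * Q - n * r : GaussianInt) : ℂ) - 0 = (ν - n * (r / Q)) * Q := by
      rw [sub_zero, GaussianInt.toComplex_sub, GaussianInt.toComplex_mul,
        GaussianInt.toComplex_mul]
      field_simp
    rw [hfactor, norm_mul, mul_pow, ← gN_eq_norm_sq]
    field_simp [(gN_pos hQ).ne']
  calc ∑' n : normBall M, gaussMass a ((n : GaussianInt) * (r / Q) : ℂ)
      = ∑' p : normBall M × GaussianInt,
          ENNReal.ofReal (exp (-(a / gN Q) * ‖(g p : ℂ) - 0‖ ^ 2)) := by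
        rw [ENNReal.tsum_prod']
        exact tsum_congr fun n => tsum_congr fun ν => by rw [hscale n ν]
    _ ≤ _ := tsum_comp_le_mul_tsum hfiber fun b =>
        ENNReal.ofReal (exp (-(a / gN Q) * ‖(b : ℂ) - 0‖ ^ 2))

lemma tsum_mul_le_of_encard_dvd_le (f : GaussianInt → ℝ≥0∞) {c : GaussianInt} (hc : c ≠ 0)
    {R L : ℝ} (hR : 0 ≤ R) {D : ℝ≥0∞}
    (hD : ∀ n ∈ puncturedNormBall (gN c * R * L), ({d | d ∣ n}.encard : ℝ≥0∞) ≤ D) :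
    ∑' (j : puncturedNormBall R) (h : puncturedNormBall L), f (c * j * h) ≤
      D * ∑' n : puncturedNormBall (gN c * R * L), f n := by
  let g (p : puncturedNormBall R × puncturedNormBall L) : puncturedNormBall (gN c * R * L) :=
    ⟨c * p.1 * p.2, mul_ne_zero (mul_ne_zero hc p.1.2.1) p.2.2.1, by
      rw [gN_mul, gN_mul]
      have := gN_nonneg c
      have := gN_nonneg p.2
      gcongr
      exacts [p.1.2.2, p.2.2.2]⟩
  have hfiber (n : puncturedNormBall (gN c * R * L)) : ((g ⁻¹' {n}).encard : ℝ≥0∞) ≤ D := by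
    refine le_trans (ENat.toENNReal_mono ?_) (hD n n.2)
    refine Set.encard_le_encard_of_injOn (f := fun p => (p.2 : GaussianInt)) ?_ ?_
    · exact fun p hp => Dvd.intro_left _ (congrArg Subtype.val hp)
    · intro p hp p' hp' hpp'
      have hsnd : p.2 = p'.2 := Subtype.ext hpp'
      refine Prod.ext (Subtype.ext ?_) hsnd
      have heq : c * p.1 * p.2 = c * p'.1 * p'.2 := congrArg Subtype.val (hp.trans hp'.symm)
      rw [hsnd] at heq
      exact mul_left_cancel₀ hc (mul_right_cancel₀ p'.2.2.1 heq)
  rw [← ENNReal.tsum_prod]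
  exact tsum_comp_le_mul_tsum hfiber fun n => f n

lemma iteratedWeylSum_indicator_one_succ (W : ℂ → ℝ≥0∞) (S : Set GaussianInt) (m : ℕ) (α : ℂ) :
    iteratedWeylSum W (S.indicator 1) (m + 1) α =
      ∑' h : S, iteratedWeylSum W (S.indicator 1) m ((m + 2 : ℕ) * α * (h : GaussianInt)) := by
  rw [iteratedWeylSum, tsum_subtype S fun h : GaussianInt =>
    iteratedWeylSum W (S.indicator 1) m ((m + 2 : ℕ) * α * h)]
  refine tsum_congr fun h => ?_
  by_cases hh : h ∈ S
  · rw [Set.indicator_of_mem hh, Set.indicator_of_mem hh, Pi.one_apply, one_mul]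
  · rw [Set.indicator_of_notMem hh, Set.indicator_of_notMem hh, zero_mul]

lemma tsum_iteratedWeylSum_indicator_succ_le (W : ℂ → ℝ≥0∞) (β : ℂ) (m : ℕ) {R L : ℝ}
    (hR : 0 ≤ R) {D : ℝ≥0∞}
    (hD : ∀ n ∈ puncturedNormBall (((m + 2 : ℕ) : ℝ) ^ 2 * R * L),
      ({d | d ∣ n}.encard : ℝ≥0∞) ≤ D) :
    ∑' j : puncturedNormBall R,
        iteratedWeylSum W ((puncturedNormBall L).indicator 1) (m + 1) ((j : GaussianInt) * β) ≤
      D * ∑' n : puncturedNormBall (((m + 2 : ℕ) : ℝ) ^ 2 * R * L),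
        iteratedWeylSum W ((puncturedNormBall L).indicator 1) m ((n : GaussianInt) * β) := by
  set S := puncturedNormBall L
  set c : GaussianInt := ((m + 2 : ℕ) : GaussianInt) with hc_def
  have hc : c ≠ 0 := Nat.cast_ne_zero.2 (by omega)
  have hexpand (j : GaussianInt) : iteratedWeylSum W (S.indicator 1) (m + 1) (j * β) =
      ∑' h : S, iteratedWeylSum W (S.indicator 1) m ((c * j * h : GaussianInt) * β) := by
    rw [iteratedWeylSum_indicator_one_succ]
    refine tsum_congr fun h => congrArg _ ?_
    rw [GaussianInt.toComplex_mul, GaussianInt.toComplex_mul, hc_def, map_natCast]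
    ring
  rw [← gN_natCast] at hD ⊢
  simp_rw [hexpand]
  exact tsum_mul_le_of_encard_dvd_le (fun n => iteratedWeylSum W (S.indicator 1) m (n * β)) hc hR hD

lemma tsum_iteratedWeylSum_indicator_le (W : ℂ → ℝ≥0∞) (β : ℂ) {L M : ℝ} (hL : 1 ≤ L)
    {D : ℝ≥0∞} (hD : ∀ n ∈ puncturedNormBall M, ({d | d ∣ n}.encard : ℝ≥0∞) ≤ D) {m : ℕ}
    {R : ℝ} (hR : 0 ≤ R) (hM : ((m + 1).factorial : ℝ) ^ 2 * R * L ^ m ≤ M) :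
    ∑' j : puncturedNormBall R,
        iteratedWeylSum W ((puncturedNormBall L).indicator 1) m ((j : GaussianInt) * β) ≤
      D ^ m * ∑' n : puncturedNormBall M, W ((n : GaussianInt) * β) := by
  induction m generalizing R with
  | zero =>
    have hRM : R ≤ M := by simpa using hM
    rw [pow_zero, one_mul]
    exact ENNReal.tsum_mono_subtype (fun n : GaussianInt => W (n * β)) (puncturedNormBall_mono hRM)
  | succ m ih =>
    set R' : ℝ := ((m + 2 : ℕ) : ℝ) ^ 2 * R * L with hR'_def
    have hR' : 0 ≤ R' := by positivity
    have hfactorial : ((m + 1).factorial : ℝ) ^ 2 * R' * L ^ m ≤ M := by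
      refine le_trans (le_of_eq ?_) hM
      rw [hR'_def, Nat.factorial_succ (m + 1)]
      push_cast
      ring
    have hR'M : R' ≤ M := by
      refine le_trans ?_ hfactorial
      rw [mul_right_comm]
      refine le_mul_of_one_le_left hR' (one_le_mul_of_one_le_of_one_le (one_le_pow₀ ?_) ?_)
      · exact_mod_cast (m + 1).factorial_pos
      · exact one_le_pow₀ hL
    calc _ ≤ D * ∑' n : puncturedNormBall R',
          iteratedWeylSum W ((puncturedNormBall L).indicator 1) m ((n : GaussianInt) * β) :=
          tsum_iteratedWeylSum_indicator_succ_le W β m hR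
            fun n hn => hD n (puncturedNormBall_mono hR'M hn)
      _ ≤ D * (D ^ m * ∑' n : puncturedNormBall M, W ((n : GaussianInt) * β)) := by
          gcongr
          exact ih hR' hfactorial
      _ = _ := by rw [pow_succ', mul_assoc]

end Counting

section DivisorBound

lemma natCast_add_one_le_mul_one_add_pow {s : ℝ} (hs : 0 < s) (c : ℕ) :
    (c : ℝ) + 1 ≤ (1 + 1 / s) * (1 + s) ^ c := by
  have hbernoulli : 1 + c * s ≤ (1 + s) ^ c := one_add_mul_le_pow (by linarith) c
  calc (c : ℝ) + 1 ≤ (1 + 1 / s) * (1 + c * s) := by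
        have hexpand : (1 + 1 / s) * (1 + c * s) = c + 1 + (1 / s + c * s) := by
          field_simp
          ring
        rw [hexpand]
        exact le_add_of_nonneg_right (by positivity)
    _ ≤ _ := by gcongr

lemma natCast_add_one_le_mul_rpow_pow {x η : ℝ} (hη : 0 < η) (hx : 2 ≤ x) (c : ℕ) :
    (c : ℝ) + 1 ≤ (1 + 1 / (2 ^ η - 1)) * (x ^ η) ^ c := by
  have hs : (0 : ℝ) < 2 ^ η - 1 := sub_pos.2 (Real.one_lt_rpow one_lt_two hη)
  have hbase : 1 + (2 ^ η - 1) ≤ x ^ η := by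
    rw [add_sub_cancel]
    exact Real.rpow_le_rpow zero_le_two hx hη.le
  exact (natCast_add_one_le_mul_one_add_pow hs c).trans (by gcongr)

lemma natCast_add_one_le_rpow_pow {x η : ℝ} (hη : 0 < η) (hx : 2 ^ (1 / η) ≤ x) (c : ℕ) :
    (c : ℝ) + 1 ≤ (x ^ η) ^ c := by
  have hbase : 2 ≤ x ^ η := calc
    (2 : ℝ) = (2 ^ (1 / η)) ^ η := by
      rw [← Real.rpow_mul zero_le_two, one_div_mul_cancel hη.ne', Real.rpow_one]
    _ ≤ x ^ η := by gcongr
  calc (c : ℝ) + 1 ≤ 2 ^ c := by exact_mod_cast Nat.lt_two_pow_self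
    _ ≤ (x ^ η) ^ c := by gcongr

lemma prod_toFinset_pow_count_rpow {α : Type*} [DecidableEq α] {ν : α → ℝ} (hν : ∀ a, 0 ≤ ν a)
    (F : Multiset α) (η : ℝ) :
    ∏ a ∈ F.toFinset, (ν a ^ η) ^ F.count a = (F.map ν).prod ^ η := by
  rw [Finset.prod_multiset_map_count, ← Real.finsetProd_rpow _ _ fun a _ => pow_nonneg (hν a) _]
  exact Finset.prod_congr rfl fun a _ => (Real.rpow_pow_comm (hν a) _ _)

lemma exists_card_Iic_le_mul_prod_rpow {α : Type*} [DecidableEq α] {ν : α → ℝ}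
    (hν : ∀ a, 0 ≤ ν a) (hfinite : ∀ X, {a | ν a ≤ X}.Finite) {η : ℝ} (hη : 0 < η) :
    ∃ C : ℝ, 0 < C ∧ ∀ F : Multiset α, (∀ a ∈ F, 2 ≤ ν a) →
      ((Finset.Iic F).card : ℝ) ≤ C * (F.map ν).prod ^ η := by
  have hs : (0 : ℝ) < 2 ^ η - 1 := sub_pos.2 (Real.one_lt_rpow one_lt_two hη)
  set K : ℝ := 1 + 1 / (2 ^ η - 1)
  have hK : 1 ≤ K := le_add_of_nonneg_right (by positivity)
  set T := (hfinite (2 ^ (1 / η))).toFinset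
  refine ⟨K ^ T.card, by positivity, fun F hF => ?_⟩
  have hlocal (a : α) (ha : a ∈ F.toFinset) :
      (F.count a : ℝ) + 1 ≤ (if a ∈ T then K else 1) * (ν a ^ η) ^ F.count a := by
    split_ifs with haT
    · exact natCast_add_one_le_mul_rpow_pow hη (hF a (Multiset.mem_toFinset.1 ha)) _
    · have hlarge : 2 ^ (1 / η) ≤ ν a :=
        (not_le.1 fun hle => haT ((Set.Finite.mem_toFinset _).2 hle)).le
      rw [one_mul]
      exact natCast_add_one_le_rpow_pow hη hlarge _
  have hexceptional : ∏ a ∈ F.toFinset, (if a ∈ T then K else 1) ≤ K ^ T.card := by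
    rw [← Finset.prod_filter, Finset.prod_const]
    exact pow_le_pow_right₀ hK (Finset.card_le_card fun a ha => (Finset.mem_filter.1 ha).2)
  calc ((Finset.Iic F).card : ℝ) = ∏ a ∈ F.toFinset, ((F.count a : ℝ) + 1) := by
        rw [Multiset.card_Iic]
        push_cast
        rfl
    _ ≤ ∏ a ∈ F.toFinset, (if a ∈ T then K else 1) * (ν a ^ η) ^ F.count a :=
        Finset.prod_le_prod (fun _ _ => by positivity) hlocal
    _ ≤ K ^ T.card * ∏ a ∈ F.toFinset, (ν a ^ η) ^ F.count a := by
        rw [Finset.prod_mul_distrib]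
        have := Finset.prod_nonneg fun a (_ : a ∈ F.toFinset) =>
          pow_nonneg (Real.rpow_nonneg (hν a) η) (F.count a)
        gcongr
    _ = K ^ T.card * (F.map ν).prod ^ η := by rw [prod_toFinset_pow_count_rpow hν]

open UniqueFactorizationMonoid in
lemma encard_dvd_le {α : Type*} [CommMonoidWithZero α] [StrongNormalizationMonoid α]
    [UniqueFactorizationMonoid α] [DecidableEq α] {n : α} (hn : n ≠ 0) :
    {d | d ∣ n}.encard ≤ (Finset.Iic (normalizedFactors n)).card * ENat.card αˣ := by
  have hsubset : {d | d ∣ n} ⊆ (fun p : Multiset α × αˣ => p.1.prod * p.2) ''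
      ((Finset.Iic (normalizedFactors n) : Set (Multiset α)) ×ˢ Set.univ) := by
    intro d hd
    have hd0 : d ≠ 0 := ne_zero_of_dvd_ne_zero hn hd
    obtain ⟨v, hv⟩ := prod_normalizedFactors hd0
    exact ⟨(normalizedFactors d, v), ⟨Finset.mem_coe.2 (Finset.mem_Iic.2
      ((dvd_iff_normalizedFactors_le_normalizedFactors hd0 hn).1 hd)), Set.mem_univ v⟩, hv⟩
  refine (Set.encard_mono hsubset).trans ((Set.encard_image_le _ _).trans_eq ?_)
  rw [Set.encard_prod, Set.encard_coe_eq_coe_finsetCard, Set.encard_univ]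

lemma gN_one : gN 1 = 1 := by
  simpa using gN_natCast 1

lemma gN_eq_one_iff {z : GaussianInt} : gN z = 1 ↔ IsUnit z := by
  rw [gN_eq_natAbs_norm, Nat.cast_eq_one, Zsqrtd.norm_eq_one_iff]

lemma two_le_gN {z : GaussianInt} (hz : z ≠ 0) (hunit : ¬IsUnit z) : 2 ≤ gN z := by
  have hlt : 1 < gN z := (one_le_gN hz).lt_of_ne' (gN_eq_one_iff.not.2 hunit)
  rw [gN_eq_natAbs_norm] at hlt ⊢
  exact_mod_cast hlt

lemma gN_multiset_prod (F : Multiset GaussianInt) : gN F.prod = (F.map gN).prod := by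
  induction F using Multiset.induction_on with
  | empty => simpa using gN_one
  | cons a F ih => rw [Multiset.prod_cons, gN_mul, ih, Multiset.map_cons, Multiset.prod_cons]

lemma finite_units_gaussianInt : Finite GaussianIntˣ := by
  have : Finite (normBall 1) := (finite_normBall 1).to_subtype
  exact Finite.of_injective (fun u : GaussianIntˣ =>
    (⟨u, (gN_eq_one_iff.2 u.isUnit).le⟩ : normBall 1)) fun u v huv =>
      Units.ext (congrArg Subtype.val huv)

open UniqueFactorizationMonoid in
lemma exists_encard_dvd_le_mul_gN_rpow {η : ℝ} (hη : 0 < η) :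
    ∃ C : ℝ, 0 < C ∧ ∀ n : GaussianInt, n ≠ 0 →
      ({d | d ∣ n}.encard : ℝ≥0∞) ≤ ENNReal.ofReal (C * gN n ^ η) := by
  classical
  let _ : StrongNormalizationMonoid GaussianInt :=
    UniqueFactorizationMonoid.strongNormalizationMonoid
  have := finite_units_gaussianInt
  obtain ⟨C, hC, hIic⟩ := exists_card_Iic_le_mul_prod_rpow gN_nonneg finite_normBall hη
  refine ⟨C * Nat.card GaussianIntˣ, mul_pos hC (Nat.cast_pos.2 Nat.card_pos), fun n hn => ?_⟩
  obtain ⟨v, hv⟩ := prod_normalizedFactors hn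
  have hnorm : ((normalizedFactors n).map gN).prod = gN n := by
    rw [← gN_multiset_prod, ← congrArg gN hv, gN_mul, gN_eq_one_iff.2 v.isUnit, mul_one]
  have hcard : ((Finset.Iic (normalizedFactors n)).card : ℝ) ≤ C * gN n ^ η := by
    rw [← hnorm]
    refine hIic _ fun p hp => ?_
    have hprime := prime_of_normalized_factor p hp
    exact two_le_gN hprime.ne_zero hprime.not_isUnit
  calc ({d | d ∣ n}.encard : ℝ≥0∞)
      ≤ ((Finset.Iic (normalizedFactors n)).card * Nat.card GaussianIntˣ : ℕ) := by
        refine (ENat.toENNReal_mono (encard_dvd_le hn)).trans_eq ?_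
        rw [ENat.card_eq_coe_natCard]
        norm_cast
    _ ≤ ENNReal.ofReal (C * Nat.card GaussianIntˣ * gN n ^ η) := by
        rw [← ENNReal.ofReal_natCast]
        refine ENNReal.ofReal_le_ofReal ?_
        push_cast
        calc _ ≤ C * gN n ^ η * Nat.card GaussianIntˣ := by gcongr
          _ = _ := by ring

lemma exists_encard_dvd_le_mul_rpow {η : ℝ} (hη : 0 < η) :
    ∃ C : ℝ, 0 < C ∧ ∀ X : ℝ, ∀ n ∈ puncturedNormBall X,
      ({d | d ∣ n}.encard : ℝ≥0∞) ≤ ENNReal.ofReal (C * X ^ η) := by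
  obtain ⟨C, hC, hdvd⟩ := exists_encard_dvd_le_mul_gN_rpow hη
  refine ⟨C, hC, fun X n hn => (hdvd n hn.1).trans (ENNReal.ofReal_le_ofReal ?_)⟩
  have := gN_nonneg n
  gcongr
  exact hn.2

end DivisorBound

section PowerSums

lemma Sk_eq_gaussPhaseSum (m : ℕ) (Q : ℝ) (q r j : GaussianInt) :
    Sk (m + 1) Q q r j = gaussPhaseSum (π / (2 ^ m * Q)) 0 fun z =>
      ((monomial (m + 1) ((j : ℂ) * (r / (q ^ (m + 1) : GaussianInt)))).eval (z : ℂ)).re := by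
  refine tsum_congr fun z => ?_
  have hweight : -π * gN z / (2 ^ (m + 1 - 1) * Q) = -(π / (2 ^ m * Q)) * ‖(z : ℂ) - 0‖ ^ 2 := by
    rw [Nat.add_sub_cancel, gN_eq_norm_sq, sub_zero]
    ring
  have hphase : (j : ℂ) * r * z ^ (m + 1) / q ^ (m + 1) =
      (monomial (m + 1) ((j : ℂ) * (r / (q ^ (m + 1) : GaussianInt)))).eval (z : ℂ) := by
    rw [eval_monomial, map_pow]
    ring
  rw [hweight, hphase]

/-- The weight `exp(-π |h|² / (2^(m+1) Q))` that Weyl differencing attaches to a shift `h`; it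
dominates the weights of all `m` differencing steps applied to `Sk (m + 1) Q`. -/
def shiftWeight (Q : ℝ) (m : ℕ) (h : GaussianInt) : ℝ≥0∞ :=
  ENNReal.ofReal (exp (-(π / (2 ^ (m + 1) * Q)) * ‖(h : ℂ)‖ ^ 2))

lemma shiftWeight_le_one {Q : ℝ} (hQ : 0 ≤ Q) (m : ℕ) : shiftWeight Q m ≤ 1 := by
  refine fun h => ENNReal.ofReal_le_one.2 (Real.exp_le_one_iff.2 ?_)
  rw [neg_mul]
  exact neg_nonpos.2 (by positivity)

lemma tsum_shiftWeight_le {Q : ℝ} (hQ : 1 ≤ Q) (m : ℕ) :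
    ∑' h, shiftWeight Q m h ≤ ENNReal.ofReal (theta ^ 2 * 2 ^ (m + 1) * Q) := by
  have hscale : 1 ≤ 2 ^ (m + 1) * Q := one_le_mul_of_one_le_of_one_le (one_le_pow₀ one_le_two) hQ
  simpa only [gaussMass, sub_zero, shiftWeight, mul_assoc] using gaussMass_pi_div_le hscale 0

lemma enorm_Sk_pow_le {Q : ℝ} (hQ : 0 < Q) (m : ℕ) (q r j : GaussianInt) :
    ‖Sk (m + 1) Q q r j‖ₑ ^ 2 ^ m ≤
      ENNReal.ofReal Q * (∑' h, shiftWeight Q m h) ^ (2 ^ m - (m + 1)) *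
        iteratedWeylSum (gaussMass (π * Q)) (shiftWeight Q m) m
          (j * (r / (q ^ (m + 1) : GaussianInt))) := by
  simpa only [← Sk_eq_gaussPhaseSum, coeff_monomial_same] using
    enorm_gaussPhaseSum_eval_pow_le hQ (fun h => (le_refl (shiftWeight Q m h))) 0
      (natDegree_monomial_le ((j : ℂ) * (r / (q ^ (m + 1) : GaussianInt))))

lemma iteratedWeylSum_shiftWeight_le {Q : ℝ} (hQ : 1 ≤ Q) (S : Set GaussianInt) (m : ℕ) (α : ℂ) :
    iteratedWeylSum (gaussMass (π * Q)) (shiftWeight Q m) m α ≤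
      m * (∑' h, Sᶜ.indicator (shiftWeight Q m) h) * (∑' h, shiftWeight Q m h) ^ (m - 1) *
          ENNReal.ofReal (theta ^ 2) +
        iteratedWeylSum (gaussMass (π * Q)) (S.indicator 1) m α := by
  have hmass (β : ℂ) : gaussMass (π * Q) β ≤ ENNReal.ofReal (theta ^ 2) :=
    (gaussMass_anti (by simpa using le_mul_of_one_le_right pi_pos.le hQ) β).trans <| by
      simpa using gaussMass_pi_div_le le_rfl β
  have hsplit := iteratedWeylSum_add_le hmass (S.indicator (shiftWeight Q m))
    (Sᶜ.indicator (shiftWeight Q m)) m α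
  rw [Set.indicator_self_add_compl] at hsplit
  refine hsplit.trans (add_le_add_right (iteratedWeylSum_mono _ ?_ m α) _)
  exact fun h => Set.indicator_le_indicator (shiftWeight_le_one (zero_le_one.trans hQ) m h)

lemma tsum_enorm_Sk_pow_le {Q : ℝ} (hQ : 1 ≤ Q) {m : ℕ} {q r : GaussianInt} (hq : q ≠ 0)
    (hrq : IsCoprime r q) {L M R : ℝ} (hL : 1 ≤ L) (hR : 0 ≤ R)
    (hM : ((m + 1).factorial : ℝ) ^ 2 * R * L ^ m ≤ M) {D : ℝ≥0∞}
    (hD : ∀ n ∈ puncturedNormBall M, ({d | d ∣ n}.encard : ℝ≥0∞) ≤ D) :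
    ∑' j : puncturedNormBall R, ‖Sk (m + 1) Q q r j‖ₑ ^ 2 ^ m ≤
      ENNReal.ofReal Q * (∑' h, shiftWeight Q m h) ^ (2 ^ m - (m + 1)) *
        ((puncturedNormBall R).encard *
            (m * (∑' h, (puncturedNormBall L)ᶜ.indicator (shiftWeight Q m) h) *
              (∑' h, shiftWeight Q m h) ^ (m - 1) * ENNReal.ofReal (theta ^ 2)) +
          D ^ m * ((normBall (4 * M / gN (q ^ (m + 1)))).encard *
            gaussMass (π * Q / gN (q ^ (m + 1))) 0)) := by
  refine (ENNReal.tsum_le_tsum fun j : puncturedNormBall R =>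
    (enorm_Sk_pow_le (by linarith) m q r j).trans (mul_le_mul_right
      (iteratedWeylSum_shiftWeight_le hQ (puncturedNormBall L) m _) _)).trans ?_
  rw [ENNReal.tsum_mul_left, ENNReal.tsum_add, ENNReal.tsum_set_const]
  gcongr
  refine (tsum_iteratedWeylSum_indicator_le _ _ hL hD hR hM).trans ?_
  gcongr
  refine le_trans (ENNReal.tsum_mono_subtype (fun n : GaussianInt =>
    gaussMass (π * Q) (n * (r / (q ^ (m + 1) : GaussianInt))))
    (puncturedNormBall_subset_normBall M)) ?_
  exact tsum_gaussMass_mul_div_le _ (pow_ne_zero _ hq) hrq.pow_right M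

end PowerSums

section TermBounds

lemma exists_mul_exp_neg_rpow_le {b η : ℝ} (hb : 0 < b) (hη : 0 < η) :
    ∃ C : ℝ, 0 < C ∧ ∀ x : ℝ, 1 ≤ x → x * exp (-(b * x ^ η)) ≤ C := by
  obtain ⟨n, hn⟩ := exists_nat_ge (1 / η)
  refine ⟨n.factorial / b ^ n, by positivity, fun x hx => ?_⟩
  have hx0 : 0 < x := by linarith
  have hpow : x ≤ (x ^ η) ^ n := by
    rw [← Real.rpow_natCast, ← Real.rpow_mul hx0.le]
    exact Real.self_le_rpow_of_one_le hx ((div_le_iff₀' hη).1 hn)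
  rw [Real.exp_neg, ← div_eq_mul_inv, div_le_div_iff₀ (exp_pos _) (by positivity)]
  calc x * b ^ n ≤ (b * x ^ η) ^ n := by rw [mul_pow, mul_comm]; gcongr
    _ ≤ n.factorial * exp (b * x ^ η) :=
        (div_le_iff₀' (by positivity)).1 (Real.pow_div_factorial_le_exp _ (by positivity) n)

lemma compl_indicator_shiftWeight_le {Q L : ℝ} (hQ : 0 < Q) (m : ℕ) :
    (puncturedNormBall L)ᶜ.indicator (shiftWeight Q m) ≤ Pi.single 0 1 +
      fun h => ENNReal.ofReal (exp (-(π / (2 ^ (m + 2) * Q) * L))) * shiftWeight Q (m + 1) h := by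
  refine Set.indicator_le' (fun h hh => ?_) fun h _ => zero_le
  rcases eq_or_ne h 0 with rfl | hh0
  · rw [Pi.add_apply, Pi.single_eq_same]
    exact le_add_right (shiftWeight_le_one hQ.le m 0)
  have hlarge : L < ‖(h : ℂ)‖ ^ 2 := by
    rw [← gN_eq_norm_sq]
    exact not_le.1 fun hle => hh ⟨hh0, hle⟩
  refine le_add_left ?_
  simp only [shiftWeight]
  rw [← ENNReal.ofReal_mul (exp_pos _).le, ← Real.exp_add]
  gcongr
  have hhalf : π / (2 ^ (m + 1) * Q) = 2 * (π / (2 ^ (m + 2) * Q)) := by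
    rw [pow_succ _ (m + 1)]
    field_simp
  have hrate : 0 < π / (2 ^ (m + 2) * Q) := by positivity
  rw [hhalf]
  linarith [mul_lt_mul_of_pos_left hlarge hrate]

lemma exists_tsum_compl_indicator_shiftWeight_le {η : ℝ} (hη : 0 < η) (m : ℕ) :
    ∃ C : ℝ, 0 < C ∧ ∀ Q : ℝ, 1 ≤ Q →
      ∑' h, (puncturedNormBall (Q ^ (1 + η)))ᶜ.indicator (shiftWeight Q m) h ≤
        ENNReal.ofReal C := by
  obtain ⟨C, hC, hexp⟩ := exists_mul_exp_neg_rpow_le (b := π / 2 ^ (m + 2)) (by positivity) hη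
  refine ⟨1 + theta ^ 2 * 2 ^ (m + 2) * C, by positivity, fun Q hQ => ?_⟩
  have hQ0 : 0 < Q := by linarith
  have hrate : π / (2 ^ (m + 2) * Q) * Q ^ (1 + η) = π / 2 ^ (m + 2) * Q ^ η := by
    rw [Real.rpow_one_add' hQ0.le (by positivity)]
    field_simp
  have hle := ENNReal.tsum_le_tsum (compl_indicator_shiftWeight_le (L := Q ^ (1 + η)) hQ0 m)
  simp only [hrate, Pi.add_apply] at hle
  rw [ENNReal.tsum_add, tsum_pi_single, ENNReal.tsum_mul_left] at hle
  calc _ ≤ 1 + ENNReal.ofReal (exp (-(π / 2 ^ (m + 2) * Q ^ η))) *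
        ENNReal.ofReal (theta ^ 2 * 2 ^ (m + 2) * Q) := by
        refine hle.trans ?_
        gcongr
        exact tsum_shiftWeight_le hQ (m + 1)
    _ = ENNReal.ofReal (1 + theta ^ 2 * 2 ^ (m + 2) *
          (Q * exp (-(π / 2 ^ (m + 2) * Q ^ η)))) := by
        rw [← ENNReal.ofReal_mul (exp_pos _).le, ENNReal.ofReal_add zero_le_one (by positivity),
          ENNReal.ofReal_one]
        ring_nf
    _ ≤ ENNReal.ofReal (1 + theta ^ 2 * 2 ^ (m + 2) * C) := by
        gcongr
        exact hexp Q hQ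

lemma exists_degenerate_term_le {η : ℝ} (hη : 0 < η) (m : ℕ) :
    ∃ C : ℝ, 0 ≤ C ∧ ∀ Q : ℝ, 1 ≤ Q → ∀ R : ℝ,
      ENNReal.ofReal Q * (∑' h, shiftWeight Q m h) ^ (2 ^ m - (m + 1)) *
        ((puncturedNormBall R).encard *
          (m * (∑' h, (puncturedNormBall (Q ^ (1 + η)))ᶜ.indicator (shiftWeight Q m) h) *
            (∑' h, shiftWeight Q m h) ^ (m - 1) * ENNReal.ofReal (theta ^ 2))) ≤
      ENNReal.ofReal (C * (R * Q ^ (2 ^ m - 1))) := by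
  obtain ⟨t, ht, htail⟩ := exists_tsum_compl_indicator_shiftWeight_le hη m
  have := latticeConst_pos
  set c : ℝ := theta ^ 2 * 2 ^ (m + 1)
  refine ⟨c ^ (2 ^ m - (m + 1)) * (2 * latticeConst) * (m * t * c ^ (m - 1) * theta ^ 2),
    by positivity, fun Q hQ R => ?_⟩
  have : 0 ≤ Q := by linarith
  rcases m.eq_zero_or_pos with rfl | hm
  · simp
  have hexponent : Q * Q ^ (2 ^ m - (m + 1)) * Q ^ (m - 1) = Q ^ (2 ^ m - 1) := by
    have : m + 1 ≤ 2 ^ m := Nat.lt_two_pow_self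
    rw [← pow_succ', ← pow_add]
    congr 1
    omega
  calc _ ≤ ENNReal.ofReal Q * ENNReal.ofReal (c * Q) ^ (2 ^ m - (m + 1)) *
        (ENNReal.ofReal (2 * latticeConst * R) *
          (m * ENNReal.ofReal t * ENNReal.ofReal (c * Q) ^ (m - 1) *
            ENNReal.ofReal (theta ^ 2))) := by
        gcongr
        exacts [tsum_shiftWeight_le hQ m, encard_puncturedNormBall_le R, htail Q hQ,
          tsum_shiftWeight_le hQ m]
    _ = ENNReal.ofReal (Q * (c * Q) ^ (2 ^ m - (m + 1)) * (2 * latticeConst) *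
          (m * t * (c * Q) ^ (m - 1) * theta ^ 2) * R) := by
        simp (disch := positivity) only [ENNReal.ofReal_mul, ENNReal.ofReal_pow,
          ENNReal.ofReal_natCast]
        ring
    _ = _ := by
        rw [← hexponent, mul_pow, mul_pow]
        ring_nf

lemma encard_normBall_four_mul_div_le {M g Y : ℝ} (hY : 0 < Y) (hM : 0 ≤ M) (hg : Y / 2 ≤ g) :
    ((normBall (4 * M / g)).encard : ℝ≥0∞) ≤ ENNReal.ofReal (8 * latticeConst * (1 + M / Y)) := by
  have hg0 : 0 < g := by linarith
  have := latticeConst_pos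
  have hratio : 4 * M / g ≤ 8 * (M / Y) := calc
    4 * M / g ≤ 4 * M / (Y / 2) := by gcongr
    _ = _ := by field_simp; ring
  refine (encard_normBall_le (by positivity)).trans (ENNReal.ofReal_le_ofReal ?_)
  calc _ ≤ latticeConst * (8 * (1 + M / Y)) := by gcongr; linarith
    _ = _ := by ring

lemma gaussMass_pi_mul_div_le {Q g : ℝ} {m : ℕ} (hQ : 1 ≤ Q) (hg0 : 0 < g)
    (hg : g ≤ Q ^ (m + 1)) :
    gaussMass (π * Q / g) 0 ≤ ENNReal.ofReal (2 * theta ^ 2 * Q ^ m) := by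
  have hQ0 : 0 < Q := by linarith
  refine (gaussMass_le (by positivity) 0).trans (ENNReal.ofReal_le_ofReal ?_)
  have hinverse : π / (π * Q / g) ≤ Q ^ m := by
    rwa [div_div_eq_mul_div, mul_div_mul_left _ _ pi_ne_zero, div_le_iff₀ hQ0, ← pow_succ]
  calc _ ≤ theta ^ 2 * (Q ^ m + Q ^ m) := by gcongr; exact one_le_pow₀ hQ
    _ = _ := by ring

lemma exists_generic_term_le (m : ℕ) :
    ∃ C : ℝ, 0 < C ∧ ∀ Q : ℝ, 1 ≤ Q → ∀ g : ℝ, Q ^ (m + 1) / 2 ≤ g → g ≤ Q ^ (m + 1) →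
      ∀ M : ℝ, 0 ≤ M →
        ENNReal.ofReal Q * (∑' h, shiftWeight Q m h) ^ (2 ^ m - (m + 1)) *
          ((normBall (4 * M / g)).encard * gaussMass (π * Q / g) 0) ≤
        ENNReal.ofReal (C * (Q ^ 2 ^ m * (1 + M / Q ^ (m + 1)))) := by
  have := latticeConst_pos
  have := theta_pos
  set c : ℝ := theta ^ 2 * 2 ^ (m + 1)
  refine ⟨c ^ (2 ^ m - (m + 1)) * (8 * latticeConst) * (2 * theta ^ 2), by positivity,
    fun Q hQ g hg hg' M hM => ?_⟩
  have : 0 < Q := by linarith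
  have hg0 : 0 < g := lt_of_lt_of_le (by positivity) hg
  have hexponent : Q * Q ^ (2 ^ m - (m + 1)) * Q ^ m = Q ^ 2 ^ m := by
    have : m + 1 ≤ 2 ^ m := Nat.lt_two_pow_self
    rw [← pow_succ', ← pow_add]
    congr 1
    omega
  calc _ ≤ ENNReal.ofReal Q * ENNReal.ofReal (c * Q) ^ (2 ^ m - (m + 1)) *
        (ENNReal.ofReal (8 * latticeConst * (1 + M / Q ^ (m + 1))) *
          ENNReal.ofReal (2 * theta ^ 2 * Q ^ m)) := by
        gcongr
        exacts [tsum_shiftWeight_le hQ m, encard_normBall_four_mul_div_le (by positivity) hM hg,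
          gaussMass_pi_mul_div_le hQ hg0 hg']
    _ = ENNReal.ofReal (Q * (c * Q) ^ (2 ^ m - (m + 1)) *
          ((8 * latticeConst * (1 + M / Q ^ (m + 1))) * (2 * theta ^ 2 * Q ^ m))) := by
        simp (disch := positivity) only [ENNReal.ofReal_mul, ENNReal.ofReal_pow]
    _ = _ := by
        rw [← hexponent, mul_pow]
        ring_nf

end TermBounds

section MeanValue

lemma mul_add_mul_one_add_mul_le {A B f U V Y : ℝ} (hA : 0 ≤ A) (hB : 0 ≤ B) (hf : 1 ≤ f)
    (hU : 0 ≤ U) (hV : 0 ≤ V) (hY : 0 ≤ Y) :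
    A * U + B * (V * (1 + f * Y)) ≤ (A + B * f) * (U + V * (1 + Y)) := by
  have : 0 ≤ B * f := mul_nonneg hB (by linarith)
  calc A * U + B * (V * (1 + f * Y)) ≤ A * U + B * (V * (f * (1 + Y))) := by
        gcongr
        linarith
    _ ≤ A * U + B * (V * (f * (1 + Y))) + (B * f * U + A * (V * (1 + Y))) :=
        le_add_of_nonneg_right (by positivity)
    _ = _ := by ring

lemma exists_tsum_enorm_Sk_pow_le {η : ℝ} (hη : 0 < η) (m : ℕ) :
    ∃ C : ℝ, 0 < C ∧ ∀ Q : ℝ, 1 ≤ Q → ∀ q : GaussianInt,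
      Q ^ (m + 1) / 2 ≤ gN q ^ (m + 1) → gN q ≤ Q → ∀ r, IsCoprime r q → ∀ R : ℝ, 0 ≤ R →
        ∑' j : puncturedNormBall R, ‖Sk (m + 1) Q q r j‖ₑ ^ 2 ^ m ≤
          ENNReal.ofReal (C * (R * Q ^ (2 ^ m - 1) + (R * (Q ^ (1 + η)) ^ m) ^ (η * m) *
            Q ^ 2 ^ m * (1 + R * (Q ^ (1 + η)) ^ m / Q ^ (m + 1)))) := by
  obtain ⟨A, hA, hdegenerate⟩ := exists_degenerate_term_le hη m
  obtain ⟨B, hB, hgeneric⟩ := exists_generic_term_le m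
  obtain ⟨D, hD, hdivisors⟩ := exists_encard_dvd_le_mul_rpow hη
  set f : ℝ := ((m + 1).factorial : ℝ) ^ 2
  have hf : 1 ≤ f := one_le_pow₀ (by exact_mod_cast (m + 1).factorial_pos)
  refine ⟨A + D ^ m * f ^ (η * m) * B * f, by positivity,
    fun Q hQ q hqlower hqupper r hrq R hR => ?_⟩
  have : 0 < Q := by linarith
  have hq : q ≠ 0 := by
    rintro rfl
    have : (0 : ℝ) < gN 0 ^ (m + 1) := lt_of_lt_of_le (by positivity) hqlower
    simp [gN] at this
  set X := R * (Q ^ (1 + η)) ^ m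
  have hX : 0 ≤ X := by positivity
  have hrpow : ((f * X) ^ η) ^ m = f ^ (η * m) * X ^ (η * m) := by
    rw [← Real.rpow_mul_natCast (by positivity), Real.mul_rpow (by positivity) hX]
  have hmain := tsum_enorm_Sk_pow_le hQ hq hrq (Real.one_le_rpow hQ (by positivity)) hR
    (le_of_eq (mul_assoc f R _)) (hdivisors (f * X))
  rw [mul_add, mul_left_comm _ (_ ^ m), gN_pow] at hmain
  calc _ ≤ ENNReal.ofReal (A * (R * Q ^ (2 ^ m - 1))) +
        ENNReal.ofReal (D * (f * X) ^ η) ^ m *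
          ENNReal.ofReal (B * (Q ^ 2 ^ m * (1 + f * X / Q ^ (m + 1)))) := by
        refine hmain.trans (add_le_add (hdegenerate Q hQ R) (mul_le_mul_right ?_ _))
        exact hgeneric Q hQ _ hqlower (pow_le_pow_left₀ (gN_nonneg q) hqupper _) _ (by positivity)
    _ = ENNReal.ofReal (A * (R * Q ^ (2 ^ m - 1)) + D ^ m * f ^ (η * m) * B *
          (X ^ (η * m) * Q ^ 2 ^ m * (1 + f * X / Q ^ (m + 1)))) := by
        rw [← ENNReal.ofReal_pow (by positivity), ← ENNReal.ofReal_mul (by positivity),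
          ← ENNReal.ofReal_add (by positivity) (by positivity), mul_pow, hrpow]
        ring_nf
    _ ≤ _ := by
        refine ENNReal.ofReal_le_ofReal ?_
        rw [mul_div_assoc]
        exact mul_add_mul_one_add_mul_le hA (by positivity) hf (by positivity) (by positivity)
          (by positivity)

lemma rpow_mul_one_add_le {N Q k δ ε : ℝ} (hN : 1 ≤ N) (hQ : 1 ≤ Q) (hk : 1 ≤ k)
    (hδ : 0 ≤ δ) (hδε : 3 * δ ≤ ε) (hδ1 : 3 * δ ≤ 1) :
    (Q * N) ^ δ * (1 + N * Q ^ (ε + δ - k - 1)) ≤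
      2 * ((Q * N) ^ ε * (1 + N * Q ^ (-k - 1))) := by
  have hN0 : 0 < N := by linarith
  have hQ0 : 0 < Q := by linarith
  have hQN : 1 ≤ Q * N := one_le_mul_of_one_le_of_one_le hQ hN
  have hone : (Q * N) ^ δ ≤ (Q * N) ^ ε := Real.rpow_le_rpow_of_exponent_le hQN (by linarith)
  have hcross : (Q * N) ^ δ * (N * Q ^ (ε + δ - k - 1)) ≤
      (Q * N) ^ ε * (1 + N * Q ^ (-k - 1)) := by
    rw [Real.mul_rpow hQ0.le hN0.le, Real.mul_rpow hQ0.le hN0.le, mul_add, mul_one]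
    rcases le_total Q N with hQleN | hNleQ
    · calc Q ^ δ * N ^ δ * (N * Q ^ (ε + δ - k - 1))
          = Q ^ ε * (N ^ δ * Q ^ (2 * δ)) * (N * Q ^ (-k - 1)) := by
            rw [show ε + δ - k - 1 = ε + 2 * δ + (-k - 1) - δ by ring, Real.rpow_sub hQ0,
              Real.rpow_add hQ0, Real.rpow_add hQ0]
            field_simp
        _ ≤ Q ^ ε * (N ^ δ * N ^ (2 * δ)) * (N * Q ^ (-k - 1)) := by gcongr
        _ ≤ Q ^ ε * N ^ ε * (N * Q ^ (-k - 1)) := by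
            rw [← Real.rpow_add hN0]
            gcongr
            linarith
        _ ≤ _ := le_add_of_nonneg_left (by positivity)
    · calc Q ^ δ * N ^ δ * (N * Q ^ (ε + δ - k - 1))
          ≤ Q ^ δ * Q ^ δ * (Q * Q ^ (ε + δ - k - 1)) := by gcongr
        _ = Q ^ (ε + (3 * δ - k)) := by
            nth_rw 3 [← Real.rpow_one Q]
            rw [← Real.rpow_add hQ0, ← Real.rpow_add hQ0, ← Real.rpow_add hQ0]
            ring_nf
        _ ≤ Q ^ ε := Real.rpow_le_rpow_of_exponent_le hQ (by linarith)
        _ ≤ Q ^ ε * N ^ ε :=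
            le_mul_of_one_le_right (by positivity) (Real.one_le_rpow hN (by linarith))
        _ ≤ _ := le_add_of_nonneg_right (by positivity)
  have hmain : 0 ≤ (Q * N) ^ ε * (N * Q ^ (-k - 1)) := by positivity
  linarith

lemma mul_rpow_rpow_le {N Q ε δ τ : ℝ} (hN : 1 ≤ N) (hQ : 1 ≤ Q) (hε : 0 ≤ ε) (hτ : 0 ≤ τ)
    (hτ1 : τ ≤ 1) (hτδ : (1 + ε) * τ ≤ δ) :
    (N * Q ^ (ε - 1 + τ)) ^ τ ≤ (Q * N) ^ δ := by
  have hQN : 1 ≤ Q * N := one_le_mul_of_one_le_of_one_le hQ hN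
  calc (N * Q ^ (ε - 1 + τ)) ^ τ ≤ (N ^ (1 + ε) * Q ^ (1 + ε)) ^ τ := by
        gcongr (?_ * ?_) ^ τ
        · exact Real.self_le_rpow_of_one_le hN (by linarith)
        · exact Real.rpow_le_rpow_of_exponent_le hQ (by linarith)
    _ = (Q * N) ^ ((1 + ε) * τ) := by
        rw [← Real.mul_rpow (by positivity) (by positivity), ← Real.rpow_mul (by positivity),
          mul_comm N]
    _ ≤ (Q * N) ^ δ := Real.rpow_le_rpow_of_exponent_le hQN hτδ

lemma mean_value_exponents_le {N Q k κ ε δ τ : ℝ} (hN : 1 ≤ N) (hQ : 1 ≤ Q) (hk : 1 ≤ k)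
    (hε : 0 ≤ ε) (hτ : 0 ≤ τ) (hτδ : (1 + ε) * τ ≤ δ) (hδε : 3 * δ ≤ ε) (hδ1 : 3 * δ ≤ 1) :
    N * Q ^ (ε - k) * Q ^ (κ - 1) +
        (N * Q ^ (ε - 1 + τ)) ^ τ * Q ^ κ * (1 + N * Q ^ (ε - 1 + τ) / Q ^ k) ≤
      3 * ((Q * N) ^ ε * (Q ^ κ + N * Q ^ (κ - k - 1))) := by
  have hN0 : 0 < N := by linarith
  have hQ0 : 0 < Q := by linarith
  have hτδ' : τ ≤ δ := by nlinarith [mul_nonneg hε hτ]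
  have hsum : Q ^ κ + N * Q ^ (κ - k - 1) = Q ^ κ * (1 + N * Q ^ (-k - 1)) := by
    rw [show κ - k - 1 = κ + (-k - 1) by ring, Real.rpow_add hQ0]
    ring
  have hdegenerate : N * Q ^ (ε - k) * Q ^ (κ - 1) ≤
      (Q * N) ^ ε * (Q ^ κ + N * Q ^ (κ - k - 1)) := calc
    _ = Q ^ ε * (N * Q ^ (κ - k - 1)) := by
        rw [mul_assoc, ← Real.rpow_add hQ0, mul_left_comm, ← Real.rpow_add hQ0]
        ring_nf
    _ ≤ _ := by
        gcongr
        · exact le_mul_of_one_le_right hQ0.le hN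
        · exact le_add_of_nonneg_left (by positivity)
  have hquotient : N * Q ^ (ε - 1 + τ) / Q ^ k ≤ N * Q ^ (ε + δ - k - 1) := by
    rw [mul_div_assoc, ← Real.rpow_sub hQ0]
    exact mul_le_mul_of_nonneg_left (Real.rpow_le_rpow_of_exponent_le hQ (by linarith)) hN0.le
  have hgeneric : (N * Q ^ (ε - 1 + τ)) ^ τ * Q ^ κ * (1 + N * Q ^ (ε - 1 + τ) / Q ^ k) ≤
      2 * ((Q * N) ^ ε * (Q ^ κ + N * Q ^ (κ - k - 1))) := calc
    _ ≤ (Q * N) ^ δ * Q ^ κ * (1 + N * Q ^ (ε + δ - k - 1)) := by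
        gcongr
        exact mul_rpow_rpow_le hN hQ hε hτ (by linarith) hτδ
    _ = Q ^ κ * ((Q * N) ^ δ * (1 + N * Q ^ (ε + δ - k - 1))) := by ring
    _ ≤ Q ^ κ * (2 * ((Q * N) ^ ε * (1 + N * Q ^ (-k - 1)))) := by
        gcongr Q ^ κ * ?_
        exact rpow_mul_one_add_le hN hQ hk (hτ.trans hτδ') hδε hδ1
    _ = _ := by rw [hsum]; ring
  linarith

end MeanValue

section AveragedBound

lemma tsum_norm_pow_le_of_tsum_enorm_pow_le {ι E : Type*} [SeminormedAddCommGroup E] {f : ι → E}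
    {n : ℕ} {B : ℝ} (hB : 0 ≤ B) (h : ∑' i, ‖f i‖ₑ ^ n ≤ ENNReal.ofReal B) :
    ∑' i, ‖f i‖ ^ n ≤ B := by
  have hreal := ENNReal.toReal_le_of_le_ofReal hB h
  rw [ENNReal.tsum_toReal_eq fun i => ENNReal.pow_ne_top enorm_ne_top] at hreal
  simpa only [ENNReal.toReal_pow, toReal_enorm] using hreal

lemma pow_div_two_le_gN_pow {Q : ℝ} (hQ : 0 ≤ Q) {k : ℕ} (hk : k ≠ 0) {q : GaussianInt}
    (hq : Q / 2 ^ ((1 : ℝ) / k) ≤ gN q) : Q ^ k / 2 ≤ gN q ^ k := by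
  have hroot : ((2 : ℝ) ^ ((1 : ℝ) / k)) ^ k = 2 := by
    rw [one_div, Real.rpow_inv_natCast_pow zero_le_two hk]
  simpa only [div_pow, hroot] using pow_le_pow_left₀ (by positivity) hq k

lemma one_le_of_div_lt_gN {Q c : ℝ} (hc : 0 < c) {q : GaussianInt} (hlower : Q / c < gN q)
    (hupper : gN q ≤ Q) : 1 ≤ Q := by
  have hQ : 0 ≤ Q := (gN_nonneg q).trans hupper
  refine (one_le_gN ?_).trans hupper
  rintro rfl
  have hQc : 0 ≤ Q / c := by positivity
  simp [gN] at hlower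
  linarith

lemma exists_tsum_norm_Sk_pow_le {ε : ℝ} (hε : 0 < ε) (m : ℕ) :
    ∃ C : ℝ, 0 < C ∧ ∀ N Q : ℝ, 1 ≤ N → 1 ≤ Q → ∀ q : GaussianInt,
      Q ^ (m + 1) / 2 ≤ gN q ^ (m + 1) → gN q ≤ Q → ∀ r, IsCoprime r q →
        ∑' j : puncturedNormBall (N * Q ^ (ε - (m + 1 : ℕ))), ‖Sk (m + 1) Q q r j‖ ^ 2 ^ m ≤
          C * (Q * N) ^ ε * (Q ^ (2 : ℝ) ^ m + N * Q ^ ((2 : ℝ) ^ m - (m + 1 : ℕ) - 1)) := by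
  set δ := min ε 1 / 3 with hδ_def
  have hδ : 0 < δ := by positivity
  set η := δ / ((1 + ε) * (m + 1)) with hη_def
  have hη : 0 < η := by positivity
  have hηm : (1 + ε) * (η * m) ≤ δ := calc
    _ ≤ (1 + ε) * (η * (m + 1)) := by gcongr; linarith
    _ = δ := by rw [hη_def]; field_simp
  have hδε : 3 * δ ≤ ε := by linarith [min_le_left ε 1]
  have hδ1 : 3 * δ ≤ 1 := by linarith [min_le_right ε 1]
  obtain ⟨C, hC, hbound⟩ := exists_tsum_enorm_Sk_pow_le hη m
  refine ⟨C * 3, by positivity, fun N Q hN hQ q hqlower hqupper r hrq => ?_⟩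
  have hQ0 : 0 < Q := by linarith
  have hscale : N * Q ^ (ε - (m + 1 : ℕ)) * (Q ^ (1 + η)) ^ m = N * Q ^ (ε - 1 + η * m) := by
    rw [← Real.rpow_mul_natCast hQ0.le, mul_assoc, ← Real.rpow_add hQ0]
    push_cast
    ring_nf
  have hκ : Q ^ 2 ^ m = Q ^ (2 : ℝ) ^ m := by
    rw [← Real.rpow_natCast, Nat.cast_pow, Nat.cast_ofNat]
  have hκ1 : Q ^ (2 ^ m - 1) = Q ^ ((2 : ℝ) ^ m - 1) := by
    rw [← Real.rpow_natCast, Nat.cast_pred (by positivity), Nat.cast_pow, Nat.cast_ofNat]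
  have hk : Q ^ (m + 1) = Q ^ ((m + 1 : ℕ) : ℝ) := (Real.rpow_natCast Q (m + 1)).symm
  refine tsum_norm_pow_le_of_tsum_enorm_pow_le (by positivity)
    ((hbound Q hQ q hqlower hqupper r hrq _ (by positivity)).trans (ENNReal.ofReal_le_ofReal ?_))
  rw [hscale, hκ, hκ1, hk, mul_assoc C, mul_assoc C, mul_assoc 3]
  gcongr
  exact mean_value_exponents_le hN hQ (by simp) hε.le (by positivity) hηm hδε hδ1

end AveragedBound

end GaussPowerSum

open GaussPowerSum in
theorem averaged_bound_power_sum_general {k : ℕ} (hk : 1 ≤ k) {ε : ℝ} (hε : 0 < ε) :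
    ∃ C : ℝ, 0 < C ∧ ∀ N Q0 : ℝ, 1 ≤ N →
      ∀ q1 : GaussianInt, Q0 / (2 : ℝ) ^ ((1 : ℝ) / k) < gN q1 → gN q1 ≤ Q0 →
      ∀ r1 : GaussianInt, IsCoprime r1 q1 →
      (∑' j : {j : GaussianInt // j ≠ 0 ∧ gN j ≤ N * Q0 ^ (ε - k)},
          ‖Sk k Q0 q1 r1 (j : GaussianInt)‖ ^ (2 ^ (k - 1)))
        ≤ C * (Q0 * N) ^ ε *
            (Q0 ^ (((2 : ℝ) ^ (k - 1) : ℝ)) + N * Q0 ^ (((2 : ℝ) ^ (k - 1) : ℝ) - k - 1)) := by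
  obtain ⟨m, rfl⟩ := Nat.exists_eq_add_of_le' hk
  obtain ⟨C, hC, hbound⟩ := exists_tsum_norm_Sk_pow_le hε m
  refine ⟨C, hC, fun N Q0 hN q1 hlower hupper r1 hrq => ?_⟩
  have hQ0 : 1 ≤ Q0 := one_le_of_div_lt_gN (by positivity) hlower hupper
  have hpow := pow_div_two_le_gN_pow (by linarith) m.succ_ne_zero hlower.le
  exact hbound N Q0 hN hQ0 q1 hpow hupper r1 hrq

/-- **The averaged bound for the `k`-th power sums** (inequality (47) of the paper).
For `k ≥ 2`, `κ = 2^{k-1}`, `ε ∈ (0,1)` there is `C(k,ε)` such that for `N, Q₀ ≥ 2`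
with `Q₀ > N^{1/(2k)}`, `Q₀/2^{1/k} < N(q₁) ≤ Q₀` and `r₁` coprime to `q₁`,
`∑_{j ≠ 0, N(j) ≤ N Q₀^{ε-k}} |S_k(q₁,r₁,j)|^κ ≤ C (Q₀N)^ε (Q₀^κ + N Q₀^{κ-k-1})`. -/
theorem averaged_bound_power_sum :
    ∀ k : ℕ, 2 ≤ k → ∀ ε : ℝ, 0 < ε → ε < 1 → ∃ C : ℝ, 0 < C ∧
      ∀ (N Q0 : ℝ), 2 ≤ N → 2 ≤ Q0 → N ^ ((1 : ℝ) / (2 * k)) < Q0 →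
      ∀ q1 : GaussianInt, Q0 / (2 : ℝ) ^ ((1 : ℝ) / k) < gN q1 → gN q1 ≤ Q0 →
      ∀ r1 : GaussianInt, IsCoprime r1 q1 →
      (∑' j : {j : GaussianInt // j ≠ 0 ∧ gN j ≤ N * Q0 ^ (ε - k)},
          ‖Sk k Q0 q1 r1 (j : GaussianInt)‖ ^ (2 ^ (k - 1)))
        ≤ C * (Q0 * N) ^ ε *
            (Q0 ^ (((2 : ℝ) ^ (k - 1) : ℝ)) + N * Q0 ^ (((2 : ℝ) ^ (k - 1) : ℝ) - k - 1)) := by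
  intro k hk ε hε _
  obtain ⟨C, hC, hbound⟩ := averaged_bound_power_sum_general (one_le_two.trans hk) hε
  exact ⟨C, hC, fun N Q0 hN _ _ => hbound N Q0 (one_le_two.trans hN)⟩
end
end
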